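/- For every ε > 0 there is a constant C(ε) such that: for every integer N ≥ 2, every real α, and all integers a, q with q ≥ 1, gcd(a,q) = 1 and |α − a/q| ≤ 1/q², one has |S₃(N,α)| ≤ C(ε) · N^{1/3+ε} (1/q + N^{−1/6} + q/N)^{1/16}. -/

import Mathlib

/-- `e(x) = exp(2πix)`. -/
noncomputable def eexp (x : ℝ) : ℂ := Complex.exp (2 * Real.pi * Complex.I * x)

/-- `S₃(N,α) = Σ_{p ≤ N^{1/3}, p prime} e(αp³)`. -/
noncomputable def S₃ (N : ℕ) (α : ℝ) : ℂ :=
  ∑ p ∈ (Finset.range (N + 1)).filter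
      (fun p => Nat.Prime p ∧ (p : ℝ) ≤ (N : ℝ) ^ ((1 : ℝ) / 3)),
    eexp (α * (p : ℝ) ^ 3)


namespace MinorArc

lemma eexp_add (x y : ℝ) : eexp (x + y) = eexp x * eexp y := by
  simp only [eexp]; rw [← Complex.exp_add]; congr 1; push_cast; ring

lemma eexp_zero : eexp 0 = 1 := by simp [eexp]

lemma eexp_norm (x : ℝ) : ‖eexp x‖ = 1 := by
  have : eexp x = Complex.exp ((2 * Real.pi * x : ℝ) * Complex.I) := by
    simp only [eexp]; congr 1; push_cast; ring
  rw [this, Complex.norm_exp_ofReal_mul_I]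

lemma eexp_neg (x : ℝ) : eexp (-x) = (starRingEnd ℂ) (eexp x) := by
  simp only [eexp]; rw [← Complex.exp_conj]; congr 1
  simp only [map_mul, Complex.conj_ofReal, Complex.conj_I, map_ofNat]
  push_cast; ring

lemma eexp_int (n : ℤ) : eexp n = 1 := by
  simp only [eexp]
  have := Complex.exp_int_mul_two_pi_mul_I n
  rw [← this]; congr 1; push_cast; ring

/-- distance to the nearest integer -/
noncomputable def nn (x : ℝ) : ℝ := |x - round x|

lemma nn_nonneg (x : ℝ) : 0 ≤ nn x := abs_nonneg _

lemma nn_le (x : ℝ) (z : ℤ) : nn x ≤ |x - z| := round_le x z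

lemma nn_le_half (x : ℝ) : nn x ≤ 1 / 2 := abs_sub_round x

lemma nn_neg (x : ℝ) : nn (-x) = nn x := by
  apply le_antisymm
  · have := nn_le (-x) (-round x)
    refine this.trans (le_of_eq ?_)
    unfold nn; push_cast; rw [← abs_neg]; congr 1; ring
  · have := nn_le x (-round (-x))
    refine this.trans (le_of_eq ?_)
    unfold nn; push_cast; rw [← abs_neg]; congr 1; ring

/-- `min(N, 1/‖x‖)` up to a constant factor -/
noncomputable def G (N x : ℝ) : ℝ := 1 / (1 / N + nn x)

lemma G_nonneg {N : ℝ} (hN : 0 < N) (x : ℝ) : 0 ≤ G N x := by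
  have := nn_nonneg x
  unfold G; positivity

lemma G_le {N : ℝ} (hN : 0 < N) (x : ℝ) : G N x ≤ N := by
  have := nn_nonneg x
  unfold G
  rw [div_le_iff₀ (by positivity)]
  have : N * (1 / N) = 1 := by field_simp
  nlinarith

lemma G_neg (N x : ℝ) : G N (-x) = G N x := by simp [G, nn_neg]

lemma eexp_sub_one_norm (x : ℝ) : 4 * nn x ≤ ‖eexp x - 1‖ := by
  have h1 : eexp x = eexp (x - round x) := by
    have := eexp_add (x - round x) (round x)
    rw [eexp_int] at this
    simpa using this
  set y := x - round x with hy
  have hyle : |y| ≤ 1 / 2 := abs_sub_round x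
  have h2 : eexp y = Complex.exp (Complex.I * ((2 * Real.pi * y : ℝ))) := by
    simp only [eexp]; congr 1; push_cast; ring
  rw [h1, h2, Complex.norm_exp_I_mul_ofReal_sub_one]
  have h3 : (2 * Real.pi * y) / 2 = Real.pi * y := by ring
  rw [h3]
  have hpi := Real.pi_pos
  have h4 : |Real.pi * y| ≤ Real.pi / 2 := by
    rw [abs_mul, abs_of_pos hpi]; nlinarith
  have h5 := Real.mul_abs_le_abs_sin h4
  rw [abs_mul, abs_of_pos hpi] at h5
  have h6 : 2 / Real.pi * (Real.pi * |y|) = 2 * |y| := by field_simp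
  rw [h6] at h5
  have : nn x = |y| := rfl
  rw [this, norm_mul, Real.norm_eq_abs, Real.norm_eq_abs]
  simp only [Nat.abs_ofNat]
  linarith

lemma geom_aux (γ c : ℝ) (A : ℤ) (n : ℕ) :
    ‖∑ i ∈ Finset.range n, eexp (γ * ((A + i : ℤ) : ℝ) + c)‖ * (2 * nn γ) ≤ 1 := by
  have h1 : ∀ i : ℕ, eexp (γ * ((A + i : ℤ) : ℝ) + c) = eexp (γ * A + c) * eexp γ ^ i := by
    intro i
    induction i with
    | zero => simp
    | succ i ih =>
      rw [pow_succ, ← mul_assoc, ← ih, ← eexp_add]; congr 1; push_cast; ring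
  simp_rw [h1]
  rw [← Finset.mul_sum, norm_mul, eexp_norm, one_mul]
  have h2 := geom_sum_mul (eexp γ) n
  have h3 : ‖∑ i ∈ Finset.range n, eexp γ ^ i‖ * ‖eexp γ - 1‖ ≤ 2 := by
    rw [← norm_mul, h2]
    refine (norm_sub_le _ _).trans ?_
    rw [norm_pow, eexp_norm]; norm_num
  have h4 := eexp_sub_one_norm γ
  have h5 := norm_nonneg (∑ i ∈ Finset.range n, eexp γ ^ i)
  nlinarith

/-- geometric sum over an order-connected finite set of integers -/
lemma geom_bound (γ c : ℝ) (J : Finset ℤ) (hJ : (J : Set ℤ).OrdConnected) (N : ℝ) (hN : 0 < N)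
    (hc : (J.card : ℝ) ≤ N) :
    ‖∑ n ∈ J, eexp (γ * (n : ℝ) + c)‖ ≤ 2 * G N γ := by
  rcases J.eq_empty_or_nonempty with h | h
  · subst h; simp; exact G_nonneg hN γ
  have hJI : J = Finset.Icc (J.min' h) (J.max' h) := by
    ext x
    constructor
    · intro hx
      exact Finset.mem_Icc.2 ⟨J.min'_le x hx, J.le_max' x hx⟩
    · intro hx
      have := hJ.out (J.min'_mem h) (J.max'_mem h)
      exact this (by simpa using hx)
  set A := J.min' h
  set B := J.max' h
  have h1 : ‖∑ n ∈ J, eexp (γ * (n : ℝ) + c)‖ ≤ N := by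
    refine (norm_sum_le _ _).trans ?_
    simp [eexp_norm, hc]
  have h2 : ‖∑ n ∈ J, eexp (γ * (n : ℝ) + c)‖ * (2 * nn γ) ≤ 1 := by
    have := geom_aux γ c A (B + 1 - A).toNat
    have he : ∑ n ∈ J, eexp (γ * (n : ℝ) + c)
        = ∑ i ∈ Finset.range (B + 1 - A).toNat, eexp (γ * ((A + i : ℤ) : ℝ) + c) := by
      rw [hJI]
      refine (Finset.sum_bij (fun (i : ℕ) _ => A + (i : ℤ)) ?_ ?_ ?_ ?_).symm
      · intro i hi
        simp only [Finset.mem_range, Finset.mem_Icc] at *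
        omega
      · intro i _ j _ hij
        have : A + (i : ℤ) = A + j := hij
        omega
      · intro b hb
        simp only [Finset.mem_Icc] at hb
        refine ⟨(b - A).toNat, ?_, ?_⟩
        · simp only [Finset.mem_range]; omega
        · show A + ((b - A).toNat : ℤ) = b
          omega
      · intro i _; rfl
    rw [he]; exact this
  have hn := nn_nonneg γ
  unfold G
  rw [mul_one_div, le_div_iff₀ (by positivity)]
  have : ‖∑ n ∈ J, eexp (γ * (n : ℝ) + c)‖ * (1 / N) ≤ 1 := by
    rw [mul_one_div, div_le_one hN]; exact h1
  nlinarith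

/-- differencing identity -/
lemma diff_identity (I H : Finset ℤ) (hH : ∀ m ∈ I, ∀ m' ∈ I, m' - m ∈ H) (f : ℤ → ℂ) :
    ((‖∑ m ∈ I, f m‖ ^ 2 : ℝ) : ℂ) =
      ∑ h ∈ H, ∑ m ∈ I with m + h ∈ I, f (m + h) * (starRingEnd ℂ) (f m) := by
  have h1 : ((‖∑ m ∈ I, f m‖ ^ 2 : ℝ) : ℂ) = (∑ m ∈ I, f m) * (starRingEnd ℂ) (∑ m ∈ I, f m) := by
    rw [Complex.mul_conj, Complex.normSq_eq_norm_sq]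
  rw [h1, map_sum, Finset.sum_mul_sum, Finset.sum_comm]
  have h2 : ∀ h ∈ H, ∑ m ∈ I with m + h ∈ I, f (m + h) * (starRingEnd ℂ) (f m)
      = ∑ m ∈ I, if m + h ∈ I then f (m + h) * (starRingEnd ℂ) (f m) else 0 := by
    intro h _; rw [Finset.sum_filter]
  rw [Finset.sum_congr rfl h2, Finset.sum_comm (s := H)]
  refine Finset.sum_congr rfl fun m hm => ?_
  rw [← Finset.sum_filter]
  refine Finset.sum_bij (fun m' _ => m' - m) ?_ ?_ ?_ ?_
  · intro m' hm'
    simp [hH m hm m' hm', hm']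
  · intro a _ b _ hab
    simpa using hab
  · intro b hb
    simp only [Finset.mem_filter] at hb
    exact ⟨m + b, hb.2, by simp⟩
  · intro m' hm'
    simp

/-- cube Weyl differencing index set -/
def I4 (I : Finset ℤ) (h h' : ℤ) : Finset ℤ :=
  (I.filter (fun m => m + h ∈ I)).filter (fun m => m + h' ∈ I.filter (fun m => m + h ∈ I))

lemma mem_I4 {I : Finset ℤ} {h h' m : ℤ} :
    m ∈ I4 I h h' ↔ m ∈ I ∧ m + h ∈ I ∧ m + h' ∈ I ∧ m + h' + h ∈ I := by
  simp only [I4, Finset.mem_filter]; tauto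

lemma weyl_cube (I H : Finset ℤ) (hH : ∀ m ∈ I, ∀ m' ∈ I, m' - m ∈ H) (β : ℝ) :
    ‖∑ m ∈ I, eexp (β * (m : ℝ) ^ 3)‖ ^ 4 ≤ H.card *
      (∑ h ∈ H, ∑ h' ∈ H, ∑ m ∈ I4 I h h',
        eexp (β * ((3 * h * h' * (2 * m + h + h') : ℤ) : ℝ))).re := by
  set f : ℤ → ℂ := fun m => eexp (β * (m : ℝ) ^ 3) with hf
  have h1 := diff_identity I H hH f
  have h2 : ‖∑ m ∈ I, f m‖ ^ 2 ≤
      ∑ h ∈ H, ‖∑ m ∈ I with m + h ∈ I, f (m + h) * (starRingEnd ℂ) (f m)‖ := by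
    have h3 : ‖((‖∑ m ∈ I, f m‖ ^ 2 : ℝ) : ℂ)‖ = ‖∑ m ∈ I, f m‖ ^ 2 := by
      rw [Complex.norm_real, Real.norm_of_nonneg (by positivity)]
    rw [← h3, h1]
    exact norm_sum_le _ _
  have h3 : (∑ h ∈ H, ‖∑ m ∈ I with m + h ∈ I, f (m + h) * (starRingEnd ℂ) (f m)‖) ^ 2 ≤
      H.card * ∑ h ∈ H, ‖∑ m ∈ I with m + h ∈ I, f (m + h) * (starRingEnd ℂ) (f m)‖ ^ 2 :=
    sq_sum_le_card_mul_sum_sq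
  have h4 : ‖∑ m ∈ I, f m‖ ^ 4 ≤
      H.card * ∑ h ∈ H, ‖∑ m ∈ I with m + h ∈ I, f (m + h) * (starRingEnd ℂ) (f m)‖ ^ 2 := by
    refine le_trans ?_ h3
    have : ‖∑ m ∈ I, f m‖ ^ 4 = (‖∑ m ∈ I, f m‖ ^ 2) ^ 2 := by ring
    rw [this]
    gcongr
  refine h4.trans (le_of_eq ?_)
  congr 1
  rw [← Complex.ofReal_re (∑ h ∈ H, _)]
  congr 1
  rw [Complex.ofReal_sum]
  refine Finset.sum_congr rfl fun h _ => ?_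
  rw [diff_identity (I.filter (fun m => m + h ∈ I)) H
    (fun m hm m' hm' => hH m (Finset.mem_filter.1 hm).1 m' (Finset.mem_filter.1 hm').1)
    (fun m => f (m + h) * (starRingEnd ℂ) (f m))]
  refine Finset.sum_congr rfl fun h' _ => ?_
  refine Finset.sum_congr rfl fun m _ => ?_
  simp only [hf]
  rw [← eexp_neg, ← eexp_neg, ← eexp_add, ← eexp_add, ← eexp_neg, ← eexp_add]
  congr 1; push_cast; ring

end MinorArc


namespace MinorArc

lemma divisor_bound (ε : ℝ) (hε : 0 < ε) :
    ∃ C : ℝ, 1 ≤ C ∧ ∀ n : ℕ, n ≠ 0 → (n.divisors.card : ℝ) ≤ C * (n : ℝ) ^ ε := by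
  set P₀ : ℕ := ⌈(2 : ℝ) ^ (1 / ε)⌉₊ with hP₀
  set C₁ : ℝ := 1 + 1 / (ε * Real.log 2) with hC₁
  have hl2 : 0 < Real.log 2 := Real.log_pos (by norm_num)
  have hC₁1 : 1 ≤ C₁ := by
    have : 0 < 1 / (ε * Real.log 2) := by positivity
    linarith
  refine ⟨C₁ ^ P₀, one_le_pow₀ hC₁1, fun n hn => ?_⟩
  have key : ∀ p ∈ n.primeFactors, ((n.factorization p + 1 : ℕ) : ℝ) ≤
      (if p < P₀ then C₁ else 1) * ((p : ℝ) ^ (n.factorization p)) ^ ε := by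
    intro p hp
    have hpp := Nat.prime_of_mem_primeFactors hp
    have hp2 : (2 : ℝ) ≤ p := by exact_mod_cast hpp.two_le
    set v := n.factorization p
    have h0 : ((p : ℝ) ^ v) ^ ε = ((p : ℝ) ^ ε) ^ v := by
      rw [← Real.rpow_natCast, ← Real.rpow_natCast, ← Real.rpow_mul (by positivity),
        ← Real.rpow_mul (by positivity), mul_comm]
    split_ifs with hlt
    · have h1 : 1 + v * (ε * Real.log 2) ≤ ((p : ℝ) ^ v) ^ ε := by
        have h2 : ((2 : ℝ) ^ ε) ^ v ≤ ((p : ℝ) ^ ε) ^ v := by gcongr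
        rw [h0]
        refine le_trans ?_ h2
        have h3 : ((2 : ℝ) ^ ε) ^ v = Real.exp (v * (ε * Real.log 2)) := by
          rw [Real.rpow_def_of_pos (by norm_num), ← Real.exp_nat_mul]; congr 1; ring
        rw [h3]
        have := Real.add_one_le_exp (v * (ε * Real.log 2))
        linarith
      have h4 : C₁ * (1 + v * (ε * Real.log 2)) ≥ ((v + 1 : ℕ) : ℝ) := by
        rw [hC₁]
        have h5 : (1 + 1 / (ε * Real.log 2)) * (1 + v * (ε * Real.log 2))
          = 1 + v + (v * (ε * Real.log 2) + 1 / (ε * Real.log 2)) := by field_simp; ring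
        rw [h5]; push_cast
        have : 0 ≤ (v * (ε * Real.log 2) + 1 / (ε * Real.log 2)) := by positivity
        linarith
      nlinarith
    · rw [one_mul, h0]
      have h2 : (2 : ℝ) ≤ (p : ℝ) ^ ε := by
        have h3 : (2 : ℝ) ^ (1 / ε) ≤ p := by
          have := Nat.le_ceil ((2 : ℝ) ^ (1 / ε))
          have h4 : (P₀ : ℝ) ≤ p := by exact_mod_cast (not_lt.1 hlt)
          linarith
        have h5 : ((2 : ℝ) ^ (1 / ε)) ^ ε ≤ (p : ℝ) ^ ε := by gcongr
        rw [← Real.rpow_mul (by norm_num), one_div, inv_mul_cancel₀ hε.ne', Real.rpow_one] at h5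
        exact h5
      have h6 : (2 : ℝ) ^ v ≤ ((p : ℝ) ^ ε) ^ v := by gcongr
      have h7 : ((v + 1 : ℕ) : ℝ) ≤ (2 : ℝ) ^ v := by
        have : v + 1 ≤ 2 ^ v := Nat.lt_two_pow_self
        exact_mod_cast this
      linarith
  rw [Nat.card_divisors hn, Nat.cast_prod]
  have h1 := Finset.prod_le_prod (fun p _ => by positivity) key
  refine h1.trans ?_
  rw [Finset.prod_mul_distrib]
  have h2 : ∏ p ∈ n.primeFactors, ((p : ℝ) ^ (n.factorization p)) ^ ε = (n : ℝ) ^ ε := by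
    rw [Real.finsetProd_rpow _ _ (fun p _ => by positivity)]
    congr 1
    have := Nat.prod_factorization_pow_eq_self hn
    conv_rhs => rw [← this]
    rw [Finsupp.prod]; push_cast; rfl
  rw [h2]
  gcongr
  rw [Finset.prod_ite]
  simp only [Finset.prod_const, one_pow, mul_one]
  apply pow_le_pow_right₀ hC₁1
  calc _ ≤ (Finset.range P₀).card := by
        apply Finset.card_le_card
        intro p hp
        simp only [Finset.mem_filter, Finset.mem_range] at *
        exact hp.2
    _ = P₀ := by simp

lemma sum_inv_le (q : ℕ) (hq : 1 ≤ q) :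
    ∑ ρ ∈ Finset.range q, (1 : ℝ) / (ρ + 1 : ℝ) ≤ 1 + Real.log q := by
  have h := harmonic_le_one_add_log q
  simpa [harmonic] using h

lemma nn_lower (q : ℕ) (hq : 1 ≤ q) (x δ : ℝ) (z : ℤ) (hx : q * x = z + δ) :
    ((min (z % q) (q - z % q) : ℤ) : ℝ) / q - |δ| / q ≤ nn x := by
  have hq0 : (0 : ℝ) < q := by exact_mod_cast hq
  have hqz : (0 : ℤ) < q := by exact_mod_cast hq
  unfold nn
  set r := round x
  have h1 : x - r = ((z - q * r : ℤ) : ℝ) / q + δ / q := by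
    field_simp; push_cast; linarith
  rw [h1]
  have h2 : ((min (z % q) (q - z % q) : ℤ) : ℝ) ≤ |((z - q * r : ℤ) : ℝ)| := by
    rw [← Int.cast_abs]
    norm_cast
    have hm := Int.emod_nonneg z hqz.ne'
    have hm2 := Int.emod_lt_of_pos z hqz
    have hd := Int.emod_add_mul_ediv z q
    set w := z % q
    set t := z / q
    have : z - q * r = w + q * (t - r) := by rw [← hd]; ring
    rw [this]
    rcases lt_trichotomy (t - r) 0 with hlt | heq | hgt
    · have : (q : ℤ) * (t - r) ≤ -q := by nlinarith
      rw [abs_of_nonpos (by linarith)]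
      exact (min_le_right _ _).trans (by linarith)
    · rw [heq, mul_zero, add_zero, abs_of_nonneg hm]; exact min_le_left _ _
    · have : (q : ℤ) ≤ q * (t - r) := by nlinarith
      rw [abs_of_nonneg (by linarith)]
      exact (min_le_left _ _).trans (by linarith)
  have h3 : |((z - q * r : ℤ) : ℝ)| / q ≤ |((z - q * r : ℤ) : ℝ) / q + δ / q| + |δ| / q := by
    have := abs_sub_abs_le_abs_sub (((z - q * r : ℤ) : ℝ) / q) (-(δ / q))
    rw [abs_neg, abs_div, abs_div, abs_of_pos hq0, sub_neg_eq_add] at this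
    linarith
  have h4 : ((min (z % q) (q - z % q) : ℤ) : ℝ) / q ≤ |((z - q * r : ℤ) : ℝ)| / q := by gcongr
  linarith

lemma G_termwise (q : ℕ) (hq : 1 ≤ q) (N : ℝ) (hN : 0 < N) (x δ : ℝ) (z : ℤ) (hx : q * x = z + δ)
    (hδ : |δ| ≤ 3 / 2) (ρ : ℕ) (hρ : z % q = ρ) :
    G N x ≤ (if ρ = 0 then N else 0) + (if ρ = 1 then N else 0) + (if ρ = q - 1 then N else 0)
      + 4 * q * (1 / (ρ + 1 : ℝ)) * 2 + 4 * q * (1 / ((q - 1 - ρ : ℕ) + 1 : ℝ)) := by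
  have hq0 : (0 : ℝ) < q := by exact_mod_cast hq
  have hqz : (0 : ℤ) < q := by exact_mod_cast hq
  have hlt : ρ < q := by
    have := Int.emod_lt_of_pos z hqz
    omega
  have p1 : 0 ≤ 4 * q * (1 / (ρ + 1 : ℝ)) * 2 := by positivity
  have p2 : 0 ≤ 4 * q * (1 / ((q - 1 - ρ : ℕ) + 1 : ℝ)) := by positivity
  have hG := G_le hN x
  by_cases h0 : ρ = 0
  · rw [if_pos h0]; split_ifs <;> linarith
  by_cases h1 : ρ = 1
  · rw [if_neg h0, if_pos h1]; split_ifs <;> linarith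
  by_cases h2 : ρ = q - 1
  · rw [if_neg h0, if_neg h1, if_pos h2]; linarith
  rw [if_neg h0, if_neg h1, if_neg h2]
  have hl := nn_lower q hq x δ z hx
  rw [hρ] at hl
  have hw : (2 : ℝ) ≤ ((min (ρ : ℤ) (q - ρ) : ℤ) : ℝ) := by
    have : (2 : ℤ) ≤ min (ρ : ℤ) (q - ρ) := by
      apply le_min <;> omega
    exact_mod_cast this
  set w := ((min (ρ : ℤ) (q - ρ) : ℤ) : ℝ) with hwdef
  have hnn : w / (4 * q) ≤ nn x := by
    have : w / (4 * q) ≤ w / q - (3 / 2) / q := by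
      rw [← sub_div, div_le_div_iff₀ (by positivity) (by positivity)]
      nlinarith
    have h3 : |δ| / q ≤ (3 / 2) / q := by gcongr
    linarith
  have hGw : G N x ≤ 4 * q * (1 / w) := by
    unfold G
    have hw0 : 0 < w := by linarith
    have : 4 * q * (1 / w) = 1 / (w / (4 * q)) := by field_simp
    rw [this]
    apply one_div_le_one_div_of_le (by positivity)
    have : 0 < 1 / N := by positivity
    linarith
  refine hGw.trans ?_
  rcases le_total (ρ : ℤ) (q - ρ) with h | h
  · have hw2 : w = ρ := by rw [hwdef, min_eq_left h]; simp
    rw [hw2] at hw ⊢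
    have : 1 / (ρ : ℝ) ≤ (1 / (ρ + 1 : ℝ)) * 2 := by
      rw [div_mul_eq_mul_div, div_le_div_iff₀ (by linarith) (by positivity)]; linarith
    have : 4 * q * (1 / (ρ : ℝ)) ≤ 4 * q * (1 / (ρ + 1 : ℝ)) * 2 := by
      rw [mul_assoc (4 * (q : ℝ))]; gcongr
    linarith
  · have hw2 : w = (q - 1 - ρ : ℕ) + 1 := by
      rw [hwdef, min_eq_right h]
      have : ((q : ℤ) - ρ) = (((q - 1 - ρ : ℕ) : ℤ) + 1) := by omega
      rw [this]; push_cast; rfl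
    rw [hw2]; linarith

lemma G_block (q : ℕ) (hq : 1 ≤ q) (a : ℤ) (hg : Int.gcd a q = 1) (α : ℝ)
    (hα : |α - (a : ℝ) / (q : ℝ)| ≤ 1 / (q : ℝ) ^ 2) (N : ℝ) (hN : 0 < N) (k₀ : ℕ) :
    ∑ j ∈ Finset.range q, G N (α * ((k₀ + j : ℕ) : ℝ)) ≤ 3 * N + 12 * q * (1 + Real.log q) := by
  have hq0 : (0 : ℝ) < q := by exact_mod_cast hq
  have hqz : (0 : ℤ) < q := by exact_mod_cast hq
  set c : ℤ := round (q * (α * k₀)) with hc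
  set ρ : ℕ → ℕ := fun j => ((c + a * j) % q).toNat with hρdef
  have hρ : ∀ j, ((c + a * j) % q) = (ρ j : ℤ) := by
    intro j
    simp only [hρdef]
    rw [Int.toNat_of_nonneg (Int.emod_nonneg _ hqz.ne')]
  have hinj : Set.InjOn ρ (Finset.range q : Set ℕ) := by
    intro i hi j hj hij
    simp only [Finset.coe_range, Set.mem_Iio] at hi hj
    have h1 : (c + a * i) % q = (c + a * j) % q := by rw [hρ, hρ, hij]
    have h2 : (q : ℤ) ∣ a * (i - j) := by
      have := Int.emod_emod_of_dvd
      have h3 := Int.ModEq.dvd (show (c + a * j) ≡ (c + a * i) [ZMOD q] from h1.symm)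
      have h4 : (c + a * i) - (c + a * j) = a * ((i : ℤ) - j) := by ring
      rwa [h4] at h3
    have h5 : (q : ℤ) ∣ (i - j : ℤ) := by
      apply Int.dvd_of_dvd_mul_right_of_gcd_one h2
      rw [Int.gcd_comm]; exact hg
    have h6 : (i - j : ℤ) = 0 := by
      apply Int.eq_zero_of_abs_lt_dvd h5
      rw [abs_lt]; constructor <;> omega
    omega
  have himg : (Finset.range q).image ρ = Finset.range q := by
    apply Finset.eq_of_subset_of_card_le
    · intro x hx
      simp only [Finset.mem_image, Finset.mem_range] at *
      obtain ⟨j, _, rfl⟩ := hx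
      have := Int.emod_lt_of_pos (c + a * j) hqz
      have h2 := hρ j
      omega
    · rw [Finset.card_image_of_injOn hinj]
  have hterm : ∀ j ∈ Finset.range q, G N (α * ((k₀ + j : ℕ) : ℝ)) ≤
      (fun ρ : ℕ => (if ρ = 0 then N else 0) + (if ρ = 1 then N else 0)
        + (if ρ = q - 1 then N else 0)
      + 4 * q * (1 / (ρ + 1 : ℝ)) * 2 + 4 * q * (1 / ((q - 1 - ρ : ℕ) + 1 : ℝ))) (ρ j) := by
    intro j hj
    have hjq : (j : ℝ) ≤ q := by
      have := Finset.mem_range.1 hj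
      exact_mod_cast this.le
    refine G_termwise q hq N hN _ (q * (α * k₀) - c + q * j * (α - a / q)) (c + a * j) ?_ ?_ (ρ j)
      (hρ j)
    · push_cast; field_simp; ring
    · have h1 : |q * (α * k₀) - c| ≤ 1 / 2 := abs_sub_round _
      have h2 : |q * j * (α - a / q)| ≤ 1 := by
        rw [abs_mul, abs_of_nonneg (by positivity)]
        calc (q * j : ℝ) * |α - a / q| ≤ (q * q) * (1 / (q : ℝ) ^ 2) := by gcongr
          _ = 1 := by field_simp
      have := abs_add_le (q * (α * k₀) - c) (q * j * (α - a / q))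
      linarith
  refine (Finset.sum_le_sum hterm).trans ?_
  rw [← Finset.sum_image (f := (fun ρ : ℕ => (if ρ = 0 then N else 0) + (if ρ = 1 then N else 0)
        + (if ρ = q - 1 then N else 0)
      + 4 * q * (1 / (ρ + 1 : ℝ)) * 2 + 4 * q * (1 / ((q - 1 - ρ : ℕ) + 1 : ℝ)))) hinj, himg]
  simp only [Finset.sum_add_distrib]
  have e1 : ∀ t : ℕ, ∑ x ∈ Finset.range q, (if x = t then N else 0) ≤ N := by
    intro t
    rw [Finset.sum_ite_eq']
    split_ifs <;> linarith
  have e2 : ∑ x ∈ Finset.range q, 4 * (q : ℝ) * (1 / (x + 1 : ℝ)) * 2 ≤ 8 * q * (1 + Real.log q) := by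
    rw [← Finset.sum_mul, ← Finset.mul_sum]
    have := sum_inv_le q hq
    nlinarith
  have e3 : ∑ x ∈ Finset.range q, 4 * (q : ℝ) * (1 / ((q - 1 - x : ℕ) + 1 : ℝ))
      ≤ 4 * q * (1 + Real.log q) := by
    rw [← Finset.mul_sum,
      Finset.sum_range_reflect (fun x : ℕ => (1 : ℝ) / ((x : ℝ) + 1)) q]
    have := sum_inv_le q hq
    nlinarith
  have := e1 0
  have := e1 1
  have := e1 (q - 1)
  linarith

lemma vinogradov (q : ℕ) (hq : 1 ≤ q) (a : ℤ) (hg : Int.gcd a q = 1) (α : ℝ)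
    (hα : |α - (a : ℝ) / (q : ℝ)| ≤ 1 / (q : ℝ) ^ 2) (N : ℝ) (hN : 0 < N) (K : ℕ) :
    ∑ k ∈ Finset.Icc 1 K, G N (α * (k : ℝ)) ≤
      ((K : ℝ) / q + 1) * (3 * N + 12 * q * (1 + Real.log q)) := by
  have hq0 : (0 : ℝ) < q := by exact_mod_cast hq
  have hblocks : ∀ t : ℕ, ∑ k ∈ Finset.range (t * q), G N (α * ((k + 1 : ℕ) : ℝ)) ≤
      t * (3 * N + 12 * q * (1 + Real.log q)) := by
    intro t
    induction t with
    | zero => simp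
    | succ t ih =>
      rw [add_mul, one_mul, Finset.sum_range_add]
      have := G_block q hq a hg α hα N hN (t * q + 1)
      have he : ∑ x ∈ Finset.range q, G N (α * ((t * q + x + 1 : ℕ) : ℝ))
        = ∑ j ∈ Finset.range q, G N (α * ((t * q + 1 + j : ℕ) : ℝ)) := by
        refine Finset.sum_congr rfl fun x _ => ?_
        congr 3; ring
      rw [he]; push_cast at *; linarith
  have h1 : ∑ k ∈ Finset.Icc 1 K, G N (α * (k : ℝ)) =
      ∑ k ∈ Finset.range K, G N (α * ((k + 1 : ℕ) : ℝ)) := by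
    rw [Finset.range_eq_Ico, Finset.sum_Ico_add' (fun k : ℕ => G N (α * (k : ℝ))) 0 K 1]
    rfl
  rw [h1]
  have hK : K ≤ (K / q + 1) * q := by
    have := Nat.lt_div_mul_add hq (a := K)
    nlinarith
  have h2 : ∑ k ∈ Finset.range K, G N (α * ((k + 1 : ℕ) : ℝ)) ≤
      ∑ k ∈ Finset.range ((K / q + 1) * q), G N (α * ((k + 1 : ℕ) : ℝ)) := by
    apply Finset.sum_le_sum_of_subset_of_nonneg
    · intro x hx; simp only [Finset.mem_range] at *; omega
    · intro i _ _; exact G_nonneg hN _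
  refine h2.trans ((hblocks _).trans ?_)
  have hlog : 0 ≤ Real.log q := Real.log_natCast_nonneg q
  gcongr
  push_cast
  have := @Nat.cast_div_le ℝ _ _ _ K q
  linarith

/-- regrouping by fibres -/
lemma sum_fiber_le {ι : Type*} [DecidableEq ι] (s : Finset ι) (κ : ι → ℕ) (K : ℕ) (R : ℝ) (F : ℕ → ℝ)
    (hF : ∀ k, 0 ≤ F k) (hκ : ∀ i ∈ s, 1 ≤ κ i ∧ κ i ≤ K)
    (hR : ∀ k ∈ Finset.Icc 1 K, ((s.filter (fun i => κ i = k)).card : ℝ) ≤ R) :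
    ∑ i ∈ s, F (κ i) ≤ R * ∑ k ∈ Finset.Icc 1 K, F k := by
  rw [← Finset.sum_fiberwise_of_maps_to (t := Finset.Icc 1 K) (g := κ)
    (fun i hi => Finset.mem_Icc.2 (hκ i hi)), Finset.mul_sum]
  refine Finset.sum_le_sum fun k hk => ?_
  have : ∑ i ∈ s with κ i = k, F (κ i) = ∑ i ∈ s with κ i = k, F k :=
    Finset.sum_congr rfl fun i hi => by rw [(Finset.mem_filter.1 hi).2]
  rw [this, Finset.sum_const, nsmul_eq_mul]
  exact mul_le_mul_of_nonneg_right (hR k hk) (hF k)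

/-- integers whose absolute value divides `k` -/
def zdiv (k : ℕ) : Finset ℤ :=
  k.divisors.image (fun d : ℕ => (d : ℤ)) ∪ k.divisors.image (fun d : ℕ => -(d : ℤ))

lemma zdiv_card (k : ℕ) : (zdiv k).card ≤ 2 * k.divisors.card := by
  unfold zdiv
  refine (Finset.card_union_le _ _).trans ?_
  have h1 := Finset.card_image_le (s := k.divisors) (f := (fun d : ℕ => (d : ℤ)))
  have h2 := Finset.card_image_le (s := k.divisors) (f := (fun d : ℕ => -(d : ℤ)))
  omega

lemma mem_zdiv {k : ℕ} (hk : k ≠ 0) {x : ℤ} (hx : x.natAbs ∣ k) : x ∈ zdiv k := by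
  unfold zdiv
  simp only [Finset.mem_union, Finset.mem_image, Nat.mem_divisors]
  rcases Int.natAbs_eq x with h | h
  · left; exact ⟨x.natAbs, ⟨hx, hk⟩, h.symm⟩
  · right; exact ⟨x.natAbs, ⟨hx, hk⟩, h.symm⟩

end MinorArc


namespace MinorArc

/-- integers of absolute value less than `M` -/
noncomputable def HH (M : ℕ) : Finset ℤ := Finset.Ioo (-(M : ℤ)) M

/-- nonzero integers of absolute value less than `M` -/
noncomputable def HH0 (M : ℕ) : Finset ℤ := (HH M).filter (fun h => h ≠ 0)

lemma HH_card (M : ℕ) : ((HH M).card : ℝ) ≤ 2 * M := by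
  have : (HH M).card ≤ 2 * M := by
    unfold HH; rw [Int.card_Ioo]; omega
  exact_mod_cast this

lemma HH0_card (M : ℕ) : ((HH0 M).card : ℝ) ≤ 2 * M := by
  refine le_trans ?_ (HH_card M)
  exact_mod_cast Finset.card_le_card (Finset.filter_subset _ _)

lemma sum_HH_split (M : ℕ) (B : ℝ) (hB : 0 ≤ B) (Q : ℤ → ℝ) (hQ : Q 0 ≤ B) :
    ∑ h ∈ HH M, Q h ≤ ∑ h ∈ HH0 M, Q h + B := by
  have h1 := Finset.sum_filter_add_sum_filter_not (HH M) (fun h => h ≠ 0) Q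
  rw [← h1]
  unfold HH0
  gcongr
  have h2 : (HH M).filter (fun h => ¬ h ≠ 0) ⊆ {0} := by
    intro x hx; simp at hx; simp [hx.2]
  rcases Finset.subset_singleton_iff.1 h2 with h | h
  · rw [h]; simpa using hB
  · rw [h]; simpa using hQ

lemma sum_HH2_split (M : ℕ) (B : ℝ) (hB : 0 ≤ B) (Q : ℤ → ℤ → ℝ) (hQ : ∀ h h', Q h h' ≤ B) :
    ∑ h ∈ HH M, ∑ h' ∈ HH M, Q h h' ≤ ∑ h ∈ HH0 M, ∑ h' ∈ HH0 M, Q h h' + 4 * M * B := by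
  have h1 : ∑ h ∈ HH M, ∑ h' ∈ HH M, Q h h' ≤
      ∑ h ∈ HH0 M, ∑ h' ∈ HH M, Q h h' + 2 * M * B := by
    apply sum_HH_split M _ (by positivity)
    calc ∑ h' ∈ HH M, Q 0 h' ≤ ∑ h' ∈ HH M, B := Finset.sum_le_sum fun h' _ => hQ 0 h'
      _ = (HH M).card * B := by simp
      _ ≤ 2 * M * B := by gcongr; exact HH_card M
  have h2 : ∑ h ∈ HH0 M, ∑ h' ∈ HH M, Q h h' ≤ ∑ h ∈ HH0 M, (∑ h' ∈ HH0 M, Q h h' + B) :=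
    Finset.sum_le_sum fun h _ => sum_HH_split M B hB (Q h) (hQ h 0)
  have h3 : ∑ h ∈ HH0 M, (∑ h' ∈ HH0 M, Q h h' + B) ≤
      ∑ h ∈ HH0 M, ∑ h' ∈ HH0 M, Q h h' + 2 * M * B := by
    rw [Finset.sum_add_distrib]
    gcongr
    simp only [Finset.sum_const, nsmul_eq_mul]
    gcongr; exact HH0_card M
  linarith

lemma I4_ordConnected (I : Finset ℤ) (hI : (I : Set ℤ).OrdConnected) (h h' : ℤ) :
    (I4 I h h' : Set ℤ).OrdConnected := by
  refine ⟨fun x hx y hy z hz => ?_⟩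
  simp only [Finset.mem_coe, mem_I4, Set.mem_Icc] at *
  have := hI.out
  refine ⟨this hx.1 hy.1 ⟨hz.1, hz.2⟩, this hx.2.1 hy.2.1 ⟨by linarith, by linarith⟩,
    this hx.2.2.1 hy.2.2.1 ⟨by linarith, by linarith⟩,
    this hx.2.2.2 hy.2.2.2 ⟨by linarith, by linarith⟩⟩

/-- Weyl inequality, one variable form -/
lemma weyl_one (N : ℕ) (hN : 1 ≤ N) (A : ℤ) (J : Finset ℤ) (hJ : (J : Set ℤ).OrdConnected)
    (hJA : J ⊆ Finset.Ico A (A + N)) (γ : ℝ) :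
    ‖∑ n ∈ J, eexp (γ * (n : ℝ) ^ 3)‖ ^ 4 ≤ 16 * (N : ℝ) ^ 3 +
      4 * N * ∑ l ∈ HH0 N, ∑ l' ∈ HH0 N, G N (γ * ((6 * l * l' : ℤ) : ℝ)) := by
  have hN0 : (0 : ℝ) < N := by exact_mod_cast hN
  have hcard : J.card ≤ N := by
    have := Finset.card_le_card hJA
    rw [Int.card_Ico] at this; omega
  have h1 := weyl_cube J (HH N) (fun m hm m' hm' => by
    have a1 := Finset.mem_Ico.1 (hJA hm)
    have a2 := Finset.mem_Ico.1 (hJA hm')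
    unfold HH; rw [Finset.mem_Ioo]; constructor <;> linarith) γ
  have h2 : (∑ h ∈ HH N, ∑ h' ∈ HH N, ∑ m ∈ I4 J h h',
        eexp (γ * ((3 * h * h' * (2 * m + h + h') : ℤ) : ℝ))).re ≤
      ∑ h ∈ HH N, ∑ h' ∈ HH N, 2 * G N (γ * ((6 * h * h' : ℤ) : ℝ)) := by
    refine (Complex.re_le_norm _).trans ?_
    refine (norm_sum_le _ _).trans (Finset.sum_le_sum fun h _ => ?_)
    refine (norm_sum_le _ _).trans (Finset.sum_le_sum fun h' _ => ?_)
    have h3 : ∀ m ∈ I4 J h h', eexp (γ * ((3 * h * h' * (2 * m + h + h') : ℤ) : ℝ)) =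
        eexp ((γ * ((6 * h * h' : ℤ) : ℝ)) * (m : ℝ) + γ * ((3 * h * h' * (h + h') : ℤ) : ℝ)) := by
      intro m _; congr 1; push_cast; ring
    rw [Finset.sum_congr rfl h3]
    apply geom_bound _ _ _ (I4_ordConnected J hJ h h') _ hN0
    have : (I4 J h h').card ≤ J.card := by
      apply Finset.card_le_card
      intro m hm; exact (mem_I4.1 hm).1
    exact_mod_cast this.trans hcard
  have h4 := sum_HH2_split N (2 * N) (by positivity)
    (fun h h' => 2 * G N (γ * ((6 * h * h' : ℤ) : ℝ))) (fun h h' => by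
      have := G_le hN0 (γ * ((6 * h * h' : ℤ) : ℝ)); linarith)
  have h5 : ∑ h ∈ HH0 N, ∑ h' ∈ HH0 N, 2 * G N (γ * ((6 * h * h' : ℤ) : ℝ)) =
      2 * ∑ h ∈ HH0 N, ∑ h' ∈ HH0 N, G N (γ * ((6 * h * h' : ℤ) : ℝ)) := by
    simp_rw [Finset.mul_sum]
  have h6 : 0 ≤ ∑ h ∈ HH0 N, ∑ h' ∈ HH0 N, 2 * G N (γ * ((6 * h * h' : ℤ) : ℝ)) + 4 * N * (2 * N) := by
    have : 0 ≤ ∑ h ∈ HH0 N, ∑ h' ∈ HH0 N, 2 * G N (γ * ((6 * h * h' : ℤ) : ℝ)) :=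
      Finset.sum_nonneg fun h _ => Finset.sum_nonneg fun h' _ => by
        have := G_nonneg hN0 (γ * ((6 * h * h' : ℤ) : ℝ)); linarith
    positivity
  calc _ ≤ ((HH N).card : ℝ) * _ := h1
    _ ≤ ((HH N).card : ℝ) * (∑ h ∈ HH0 N, ∑ h' ∈ HH0 N, 2 * G N (γ * ((6 * h * h' : ℤ) : ℝ))
          + 4 * N * (2 * N)) := by gcongr; exact h2.trans h4
    _ ≤ (2 * N) * (∑ h ∈ HH0 N, ∑ h' ∈ HH0 N, 2 * G N (γ * ((6 * h * h' : ℤ) : ℝ))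
          + 4 * N * (2 * N)) := by gcongr; exact HH_card N
    _ = _ := by rw [h5]; ring

lemma G_natAbs (N α : ℝ) (z : ℤ) : G N (α * (z : ℝ)) = G N (α * (z.natAbs : ℝ)) := by
  rcases Int.natAbs_eq z with h | h
  · conv_lhs => rw [h]
    simp
  · conv_lhs => rw [h]
    push_cast
    rw [mul_neg, G_neg]
    simp

lemma HH0_natAbs {M : ℕ} {h : ℤ} (hh : h ∈ HH0 M) : 1 ≤ h.natAbs ∧ h.natAbs ≤ M := by
  simp only [HH0, HH, Finset.mem_filter, Finset.mem_Ioo] at hh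
  omega

/-- Weyl inequality for cubes, initial segment. -/
lemma weyl_cubic (N : ℕ) (hN : 1 ≤ N) (Y : ℕ) (hY : Y ≤ N) (β : ℝ) (b : ℤ) (r : ℕ) (hr : 1 ≤ r)
    (hg : Int.gcd b r = 1) (hβ : |β - (b : ℝ) / (r : ℝ)| ≤ 1 / (r : ℝ) ^ 2)
    (Z : ℝ) (hZ1 : 1 ≤ Z) (hlog : 1 + Real.log r ≤ 4 * Z)
    (hZ : ∀ k : ℕ, k ≠ 0 → k ≤ 6 * N ^ 2 → (k.divisors.card : ℝ) ≤ Z) :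
    ‖∑ n ∈ Finset.Icc 1 Y, eexp (β * (n : ℝ) ^ 3)‖ ^ 4 ≤
      10000 * Z ^ 3 * ((N : ℝ) ^ 3 + (N : ℝ) ^ 4 / r + N * r) := by
  have hN0 : (0 : ℝ) < N := by exact_mod_cast hN
  have hN1 : (1 : ℝ) ≤ N := by exact_mod_cast hN
  have hr0 : (0 : ℝ) < r := by exact_mod_cast hr
  have h0 : ∑ n ∈ Finset.Icc 1 Y, eexp (β * (n : ℝ) ^ 3) =
      ∑ n ∈ Finset.Icc (1 : ℤ) Y, eexp (β * (n : ℝ) ^ 3) := by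
    refine Finset.sum_bij (fun n _ => (n : ℤ)) ?_ ?_ ?_ ?_
    · intro n hn; simp only [Finset.mem_Icc] at *; omega
    · intro a _ b _ h; exact_mod_cast h
    · intro b hb
      simp only [Finset.mem_Icc] at hb
      exact ⟨b.toNat, by simp only [Finset.mem_Icc]; omega, by
        show ((b.toNat : ℕ) : ℤ) = b
        omega⟩
    · intro n _; simp
  rw [h0]
  have h1 := weyl_one N hN 1 (Finset.Icc (1 : ℤ) Y) (by
      rw [Finset.coe_Icc]; exact Set.ordConnected_Icc) (by
      intro x hx; simp only [Finset.mem_Icc, Finset.mem_Ico] at *; omega) β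
  have h2 : ∑ l ∈ HH0 N, ∑ l' ∈ HH0 N, G N (β * ((6 * l * l' : ℤ) : ℝ)) ≤
      (4 * Z ^ 2) * ∑ k ∈ Finset.Icc (1 : ℕ) (6 * N ^ 2), G N (β * (k : ℝ)) := by
    rw [← Finset.sum_product' (HH0 N) (HH0 N)
      (fun l l' => G N (β * ((6 * l * l' : ℤ) : ℝ)))]
    have h3 : ∀ x ∈ HH0 N ×ˢ HH0 N, G N (β * ((6 * x.1 * x.2 : ℤ) : ℝ))
        = (fun k : ℕ => G N (β * (k : ℝ))) ((6 * x.1 * x.2).natAbs) := fun x _ => G_natAbs _ _ _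
    rw [Finset.sum_congr rfl h3]
    apply sum_fiber_le (HH0 N ×ˢ HH0 N) (fun x => (6 * x.1 * x.2).natAbs) (6 * N ^ 2) (4 * Z ^ 2)
      (fun k : ℕ => G N (β * (k : ℝ)))
    · intro k; exact G_nonneg hN0 _
    · intro x hx
      have a1 := HH0_natAbs (Finset.mem_product.1 hx).1
      have a2 := HH0_natAbs (Finset.mem_product.1 hx).2
      simp only [Int.natAbs_mul]
      show 1 ≤ 6 * _ * _ ∧ 6 * _ * _ ≤ _
      constructor
      · nlinarith
      · have := Nat.mul_le_mul a1.2 a2.2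
        nlinarith
    · intro k hk
      have hk' := Finset.mem_Icc.1 hk
      have hk0 : k ≠ 0 := by omega
      have h4 : ((HH0 N ×ˢ HH0 N).filter (fun x => (6 * x.1 * x.2).natAbs = k)).card ≤
          (zdiv k ×ˢ zdiv k).card := by
        apply Finset.card_le_card
        intro x hx
        have := (Finset.mem_filter.1 hx).2
        simp only [Int.natAbs_mul] at this
        rw [Finset.mem_product]
        constructor
        · apply mem_zdiv hk0; rw [← this]; exact ⟨6 * x.2.natAbs, by simp; ring⟩
        · apply mem_zdiv hk0; rw [← this]; exact ⟨6 * x.1.natAbs, by simp; ring⟩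
      have h5 : ((zdiv k).card : ℝ) ≤ 2 * Z := by
        have := zdiv_card k
        have h6 : ((zdiv k).card : ℝ) ≤ 2 * (k.divisors.card : ℝ) := by exact_mod_cast this
        have := hZ k hk0 hk'.2
        linarith
      rw [Finset.card_product] at h4
      have h7 : ((((HH0 N ×ˢ HH0 N).filter (fun x => (6 * x.1 * x.2).natAbs = k)).card : ℕ) : ℝ) ≤
          ((zdiv k).card : ℝ) * (zdiv k).card := by exact_mod_cast h4
      refine h7.trans ?_
      calc ((zdiv k).card : ℝ) * (zdiv k).card ≤ (2 * Z) * (2 * Z) := by gcongr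
        _ = _ := by ring
  have h3 := vinogradov r hr b hg β hβ N hN0 (6 * N ^ 2)
  have h4 : (((6 * N ^ 2 : ℕ) : ℝ) / r + 1) * (3 * N + 12 * r * (1 + Real.log r)) ≤
      ((6 * (N : ℝ) ^ 2) / r + 1) * (3 * N + 48 * r * Z) := by
    push_cast
    gcongr ?_ * (_ + ?_)
    nlinarith
  have h5 : ((6 * (N : ℝ) ^ 2) / r + 1) * (3 * N + 48 * r * Z) ≤
      Z * (18 * N ^ 3 / r + 291 * N ^ 2 + 48 * r) := by
    have e1 : ((6 * (N : ℝ) ^ 2) / r + 1) * (3 * N + 48 * r * Z) =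
      18 * N ^ 3 / r + 288 * N ^ 2 * Z + 3 * N + 48 * r * Z := by field_simp; ring
    rw [e1]
    have e2 : 18 * (N : ℝ) ^ 3 / r ≤ Z * (18 * N ^ 3 / r) := by
      have : 0 ≤ 18 * (N : ℝ) ^ 3 / r := by positivity
      nlinarith
    have e3 : 3 * (N : ℝ) ≤ Z * (3 * N ^ 2) := by
      have : (N : ℝ) ≤ N ^ 2 := by nlinarith
      nlinarith
    nlinarith
  have hZ3 : 1 ≤ Z ^ 3 := one_le_pow₀ hZ1
  calc _ ≤ _ := h1
    _ ≤ 16 * (N : ℝ) ^ 3 + 4 * N * ((4 * Z ^ 2) * (Z * (18 * N ^ 3 / r + 291 * N ^ 2 + 48 * r))) := by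
        gcongr
        refine h2.trans ?_
        gcongr
        exact h3.trans (h4.trans h5)
    _ = 16 * (N : ℝ) ^ 3 + Z ^ 3 * (288 * (N ^ 4 / r) + 4656 * N ^ 3 + 768 * (N * r)) := by
        field_simp; ring
    _ ≤ _ := by
        have e1 : (N : ℝ) ^ 3 ≤ Z ^ 3 * N ^ 3 := by
          have : 0 ≤ (N : ℝ) ^ 3 := by positivity
          nlinarith
        have e2 : 0 ≤ Z ^ 3 * (N ^ 4 / r) := by positivity
        have e3 : 0 ≤ Z ^ 3 * (N * r) := by positivity
        have e4 : 0 ≤ Z ^ 3 * (N : ℝ) ^ 3 := by positivity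
        nlinarith

end MinorArc


namespace MinorArc

/-- dyadic block -/
noncomputable def BB (M : ℕ) : Finset ℤ := Finset.Ico (M : ℤ) (M + M)

lemma BB_card (M : ℕ) : (BB M).card = M := by
  unfold BB; rw [Int.card_Ico]; omega

/-- inner sums over `m` in the bilinear form -/
noncomputable def TT (M X : ℕ) (α : ℝ) (n₁ n₂ : ℤ) : ℂ :=
  ∑ m ∈ (BB M).filter (fun m => m * n₁ ≤ X ∧ m * n₂ ≤ X),
    eexp (α * ((n₁ ^ 3 - n₂ ^ 3 : ℤ) : ℝ) * (m : ℝ) ^ 3)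

/-- bilinear form over a box -/
noncomputable def SS (M N X : ℕ) (α : ℝ) (a b : ℤ → ℂ) : ℂ :=
  ∑ m ∈ BB M, ∑ n ∈ BB N, if m * n ≤ X then a m * b n * eexp (α * ((m * n : ℤ) : ℝ) ^ 3) else 0

lemma SS_step1 (M N X : ℕ) (α : ℝ) (a b : ℤ → ℂ) (ha : ∀ m, ‖a m‖ ≤ 1) (hb : ∀ n, ‖b n‖ ≤ 1) :
    ‖SS M N X α a b‖ ^ 2 ≤ M * ∑ n₁ ∈ BB N, ∑ n₂ ∈ BB N, ‖TT M X α n₁ n₂‖ := by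
  set c : ℤ → ℤ → ℂ := fun m n =>
    if m * n ≤ X then b n * eexp (α * ((m * n : ℤ) : ℝ) ^ 3) else 0 with hc
  have h1 : ‖SS M N X α a b‖ ≤ ∑ m ∈ BB M, ‖∑ n ∈ BB N, c m n‖ := by
    unfold SS
    refine (norm_sum_le _ _).trans (Finset.sum_le_sum fun m _ => ?_)
    have : ∑ n ∈ BB N, (if m * n ≤ X then a m * b n * eexp (α * ((m * n : ℤ) : ℝ) ^ 3) else 0)
        = a m * ∑ n ∈ BB N, c m n := by
      rw [Finset.mul_sum]
      refine Finset.sum_congr rfl fun n _ => ?_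
      simp only [hc]; split_ifs <;> ring
    rw [this, norm_mul]
    have := ha m
    have h2 := norm_nonneg (∑ n ∈ BB N, c m n)
    nlinarith
  have h2 : (∑ m ∈ BB M, ‖∑ n ∈ BB N, c m n‖) ^ 2 ≤
      (BB M).card * ∑ m ∈ BB M, ‖∑ n ∈ BB N, c m n‖ ^ 2 := sq_sum_le_card_mul_sum_sq
  rw [BB_card] at h2
  have h3 : ∑ m ∈ BB M, ‖∑ n ∈ BB N, c m n‖ ^ 2 ≤
      ∑ n₁ ∈ BB N, ∑ n₂ ∈ BB N, ‖TT M X α n₁ n₂‖ := by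
    have e1 : ((∑ m ∈ BB M, ‖∑ n ∈ BB N, c m n‖ ^ 2 : ℝ) : ℂ) =
        ∑ n₁ ∈ BB N, ∑ n₂ ∈ BB N, b n₁ * (starRingEnd ℂ) (b n₂) * TT M X α n₁ n₂ := by
      have e2 : ∀ m, ((‖∑ n ∈ BB N, c m n‖ ^ 2 : ℝ) : ℂ) =
          ∑ n₁ ∈ BB N, ∑ n₂ ∈ BB N, c m n₁ * (starRingEnd ℂ) (c m n₂) := by
        intro m
        rw [← Complex.normSq_eq_norm_sq, ← Complex.mul_conj, map_sum, Finset.sum_mul_sum]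
      rw [Complex.ofReal_sum]
      simp_rw [e2]
      rw [Finset.sum_comm]
      refine Finset.sum_congr rfl fun n₁ _ => ?_
      rw [Finset.sum_comm]
      refine Finset.sum_congr rfl fun n₂ _ => ?_
      unfold TT
      rw [Finset.mul_sum, Finset.sum_filter]
      refine Finset.sum_congr rfl fun m _ => ?_
      simp only [hc]
      by_cases p1 : m * n₁ ≤ X
      · by_cases p2 : m * n₂ ≤ X
        · simp only [p1, p2, if_true, and_self, map_mul]
          rw [← eexp_neg]
          have : eexp (α * ((n₁ ^ 3 - n₂ ^ 3 : ℤ) : ℝ) * (m : ℝ) ^ 3) =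
            eexp (α * ((m * n₁ : ℤ) : ℝ) ^ 3) * eexp (-(α * ((m * n₂ : ℤ) : ℝ) ^ 3)) := by
            rw [← eexp_add]; congr 1; push_cast; ring
          rw [this]; ring
        · simp [p2]
      · simp [p1]
    have e3 : ∑ m ∈ BB M, ‖∑ n ∈ BB N, c m n‖ ^ 2 =
        ‖((∑ m ∈ BB M, ‖∑ n ∈ BB N, c m n‖ ^ 2 : ℝ) : ℂ)‖ := by
      rw [Complex.norm_real, Real.norm_of_nonneg (Finset.sum_nonneg fun _ _ => by positivity)]
    rw [e3, e1]
    refine (norm_sum_le _ _).trans (Finset.sum_le_sum fun n₁ _ => ?_)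
    refine (norm_sum_le _ _).trans (Finset.sum_le_sum fun n₂ _ => ?_)
    rw [norm_mul, norm_mul, RCLike.norm_conj]
    have q1 := hb n₁
    have q2 := hb n₂
    have q3 := norm_nonneg (TT M X α n₁ n₂)
    have : ‖b n₁‖ * ‖b n₂‖ ≤ 1 := mul_le_one₀ q1 (norm_nonneg _) q2
    nlinarith
  calc ‖SS M N X α a b‖ ^ 2 ≤ (∑ m ∈ BB M, ‖∑ n ∈ BB N, c m n‖) ^ 2 := by gcongr
    _ ≤ _ := h2
    _ ≤ _ := by gcongr

lemma SS_step2 (N : ℕ) (hN : 1 ≤ N) (f : ℤ → ℤ → ℝ) (hf : ∀ x y, 0 ≤ f x y) :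
    (∑ n₁ ∈ BB N, ∑ n₂ ∈ BB N, f n₁ n₂) ^ 4 ≤
      (N : ℝ) ^ 6 * ∑ n₁ ∈ BB N, ∑ n₂ ∈ BB N, f n₁ n₂ ^ 4 := by
  rw [← Finset.sum_product' (BB N) (BB N) f,
    ← Finset.sum_product' (BB N) (BB N) (fun x y => f x y ^ 4)]
  have h := pow_sum_div_card_le_sum_pow (s := BB N ×ˢ BB N) (f := fun x => f x.1 x.2)
    (fun x _ => hf x.1 x.2) 3
  rw [Finset.card_product, BB_card] at h
  have hN0 : (0 : ℝ) < N := by exact_mod_cast hN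
  rw [div_le_iff₀ (by positivity)] at h
  refine h.trans (le_of_eq ?_)
  push_cast; ring

/-- range of `n` after differencing in `m` -/
noncomputable def JJ (N X : ℕ) (h h' m : ℤ) : Finset ℤ :=
  (BB N).filter (fun n => m * n ≤ X ∧ (m + h) * n ≤ X ∧ (m + h') * n ≤ X ∧ (m + h' + h) * n ≤ X)

/-- inner sums over `n` after differencing in `m` -/
noncomputable def VV (N X : ℕ) (α : ℝ) (h h' m : ℤ) : ℂ :=
  ∑ n ∈ JJ N X h h' m, eexp (α * ((3 * h * h' * (2 * m + h + h') : ℤ) : ℝ) * (n : ℝ) ^ 3)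

lemma VV_norm (N X : ℕ) (α : ℝ) (h h' m : ℤ) : ‖VV N X α h h' m‖ ≤ N := by
  unfold VV
  refine (norm_sum_le _ _).trans ?_
  simp only [eexp_norm, Finset.sum_const, nsmul_eq_mul, mul_one]
  have : (JJ N X h h' m).card ≤ (BB N).card := Finset.card_le_card (Finset.filter_subset _ _)
  rw [BB_card] at this
  exact_mod_cast this

lemma SS_step3 (M N X : ℕ) (α : ℝ) :
    ∑ n₁ ∈ BB N, ∑ n₂ ∈ BB N, ‖TT M X α n₁ n₂‖ ^ 4 ≤
      2 * M * ∑ h ∈ HH M, ∑ h' ∈ HH M, ∑ m ∈ I4 (BB M) h h', ‖VV N X α h h' m‖ ^ 2 := by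
  set E : ℤ → ℤ → ℤ → ℤ → ℤ → ℂ := fun n₁ n₂ h h' m =>
    if (n₁ ∈ JJ N X h h' m ∧ n₂ ∈ JJ N X h h' m) then
      eexp (α * ((n₁ ^ 3 - n₂ ^ 3 : ℤ) : ℝ) * ((3 * h * h' * (2 * m + h + h') : ℤ) : ℝ)) else 0 with hE
  have h1 : ∀ n₁ ∈ BB N, ∀ n₂ ∈ BB N, ‖TT M X α n₁ n₂‖ ^ 4 ≤ (HH M).card *
      (∑ h ∈ HH M, ∑ h' ∈ HH M, ∑ m ∈ I4 (BB M) h h', E n₁ n₂ h h' m).re := by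
    intro n₁ hn₁ n₂ hn₂
    unfold TT
    have w := weyl_cube ((BB M).filter (fun m => m * n₁ ≤ X ∧ m * n₂ ≤ X)) (HH M)
      (fun m hm m' hm' => by
        have a1 := Finset.mem_Ico.1 (Finset.mem_filter.1 hm).1
        have a2 := Finset.mem_Ico.1 (Finset.mem_filter.1 hm').1
        unfold HH; rw [Finset.mem_Ioo]; constructor <;> linarith)
      (α * ((n₁ ^ 3 - n₂ ^ 3 : ℤ) : ℝ))
    refine w.trans (le_of_eq ?_)
    congr 2
    refine Finset.sum_congr rfl fun h _ => Finset.sum_congr rfl fun h' _ => ?_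
    simp only [hE]
    rw [← Finset.sum_filter]
    refine Finset.sum_congr ?_ fun _ _ => rfl
    ext m
    simp only [mem_I4, Finset.mem_filter, JJ, hn₁, hn₂]
    tauto
  have h2 : ∑ n₁ ∈ BB N, ∑ n₂ ∈ BB N, ‖TT M X α n₁ n₂‖ ^ 4 ≤ (HH M).card *
      (∑ n₁ ∈ BB N, ∑ n₂ ∈ BB N,
        ∑ h ∈ HH M, ∑ h' ∈ HH M, ∑ m ∈ I4 (BB M) h h', E n₁ n₂ h h' m).re := by
    rw [Complex.re_sum, Finset.mul_sum]
    refine Finset.sum_le_sum fun n₁ hn₁ => ?_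
    rw [Complex.re_sum, Finset.mul_sum]
    exact Finset.sum_le_sum fun n₂ hn₂ => h1 n₁ hn₁ n₂ hn₂
  have h3 : (∑ n₁ ∈ BB N, ∑ n₂ ∈ BB N,
        ∑ h ∈ HH M, ∑ h' ∈ HH M, ∑ m ∈ I4 (BB M) h h', E n₁ n₂ h h' m) =
      ((∑ h ∈ HH M, ∑ h' ∈ HH M, ∑ m ∈ I4 (BB M) h h', ‖VV N X α h h' m‖ ^ 2 : ℝ) : ℂ) := by
    have e1 : ∀ n₁, ∑ n₂ ∈ BB N, ∑ h ∈ HH M, ∑ h' ∈ HH M, ∑ m ∈ I4 (BB M) h h', E n₁ n₂ h h' m =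
        ∑ h ∈ HH M, ∑ h' ∈ HH M, ∑ m ∈ I4 (BB M) h h', ∑ n₂ ∈ BB N, E n₁ n₂ h h' m := by
      intro n₁
      rw [Finset.sum_comm]
      refine Finset.sum_congr rfl fun h _ => ?_
      rw [Finset.sum_comm]
      refine Finset.sum_congr rfl fun h' _ => ?_
      rw [Finset.sum_comm]
    simp_rw [e1]
    rw [Finset.sum_comm, Complex.ofReal_sum]
    refine Finset.sum_congr rfl fun h _ => ?_
    rw [Finset.sum_comm, Complex.ofReal_sum]
    refine Finset.sum_congr rfl fun h' _ => ?_
    rw [Finset.sum_comm, Complex.ofReal_sum]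
    refine Finset.sum_congr rfl fun m _ => ?_
    rw [← Complex.normSq_eq_norm_sq, ← Complex.mul_conj]
    unfold VV
    rw [map_sum, Finset.sum_mul_sum]
    have hsub : JJ N X h h' m ⊆ BB N := Finset.filter_subset _ _
    symm
    rw [← Finset.sum_subset hsub]
    · refine Finset.sum_congr rfl fun n₁ hn₁ => ?_
      rw [← Finset.sum_subset hsub]
      · refine Finset.sum_congr rfl fun n₂ hn₂ => ?_
        simp only [hE, hn₁, hn₂, and_self, if_true]
        rw [← eexp_neg, ← eexp_add]; congr 1; push_cast; ring
      · intro n₂ _ hn₂; simp only [hE, hn₂, and_false, if_false]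
    · intro n₁ _ hn₁
      exact Finset.sum_eq_zero fun n₂ _ => by simp only [hE, hn₁, false_and, if_false]
  rw [h3, Complex.ofReal_re] at h2
  refine h2.trans ?_
  gcongr
  exact HH_card M

/-- index set of triples -/
noncomputable def TR (M : ℕ) : Finset (ℤ × ℤ × ℤ) :=
  (HH0 M ×ˢ HH0 M ×ˢ BB M).filter (fun x => x.2.2 ∈ I4 (BB M) x.1 x.2.1)

lemma TR_card (M : ℕ) : ((TR M).card : ℝ) ≤ 4 * (M : ℝ) ^ 3 := by
  have h1 : (TR M).card ≤ (HH0 M).card * ((HH0 M).card * M) := by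
    refine (Finset.card_filter_le _ _).trans ?_
    rw [Finset.card_product, Finset.card_product, BB_card]
  have h2 : ((TR M).card : ℝ) ≤ (HH0 M).card * ((HH0 M).card * M) := by exact_mod_cast h1
  refine h2.trans ?_
  have := HH0_card M
  calc ((HH0 M).card : ℝ) * ((HH0 M).card * M) ≤ (2 * M) * ((2 * M) * M) := by gcongr
    _ = _ := by ring

lemma sum_TR (M : ℕ) (F : ℤ → ℤ → ℤ → ℝ) :
    ∑ h ∈ HH0 M, ∑ h' ∈ HH0 M, ∑ m ∈ I4 (BB M) h h', F h h' m =
      ∑ x ∈ TR M, F x.1 x.2.1 x.2.2 := by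
  unfold TR
  rw [Finset.sum_filter, Finset.sum_product]
  refine Finset.sum_congr rfl fun h _ => ?_
  rw [Finset.sum_product]
  refine Finset.sum_congr rfl fun h' _ => ?_
  rw [← Finset.sum_filter]
  refine Finset.sum_congr ?_ fun _ _ => rfl
  ext m
  simp only [Finset.mem_filter, mem_I4]; tauto

lemma JJ_ordConnected (N X : ℕ) (hN : 1 ≤ N) (h h' m : ℤ)
    (p1 : 0 ≤ m) (p2 : 0 ≤ m + h) (p3 : 0 ≤ m + h') (p4 : 0 ≤ m + h' + h) :
    (JJ N X h h' m : Set ℤ).OrdConnected := by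
  refine ⟨fun x hx y hy z hz => ?_⟩
  simp only [JJ, BB, Finset.mem_coe, Finset.mem_filter, Finset.mem_Ico, Set.mem_Icc] at *
  refine ⟨⟨by linarith, by linarith⟩, ?_, ?_, ?_, ?_⟩
  · exact (mul_le_mul_of_nonneg_left hz.2 p1).trans hy.2.1
  · exact (mul_le_mul_of_nonneg_left hz.2 p2).trans hy.2.2.1
  · exact (mul_le_mul_of_nonneg_left hz.2 p3).trans hy.2.2.2.1
  · exact (mul_le_mul_of_nonneg_left hz.2 p4).trans hy.2.2.2.2

lemma TR_mem {M : ℕ} {x : ℤ × ℤ × ℤ} (hx : x ∈ TR M) :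
    x.1 ∈ HH0 M ∧ x.2.1 ∈ HH0 M ∧ ((M : ℤ) ≤ x.2.2 ∧ x.2.2 < M + M) ∧
    ((M : ℤ) ≤ x.2.2 + x.1 ∧ x.2.2 + x.1 < M + M) ∧
    ((M : ℤ) ≤ x.2.2 + x.2.1 ∧ x.2.2 + x.2.1 < M + M) ∧
    ((M : ℤ) ≤ x.2.2 + x.2.1 + x.1 ∧ x.2.2 + x.2.1 + x.1 < M + M) := by
  simp only [TR, Finset.mem_filter, Finset.mem_product, mem_I4, BB, Finset.mem_Ico] at hx
  tauto

lemma SS_step6 (M N X : ℕ) (hM : 1 ≤ M) (hN : 1 ≤ N) (α : ℝ) (a : ℤ) (q : ℕ) (hq : 1 ≤ q)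
    (hg : Int.gcd a q = 1) (hα : |α - (a : ℝ) / (q : ℝ)| ≤ 1 / (q : ℝ) ^ 2)
    (Z : ℝ) (hZ : ∀ k : ℕ, k ≠ 0 → k ≤ 72 * M ^ 3 * N ^ 2 → (k.divisors.card : ℝ) ≤ Z) :
    ∑ x ∈ TR M, ‖VV N X α x.1 x.2.1 x.2.2‖ ^ 4 ≤
      64 * (M : ℝ) ^ 3 * N ^ 3 + 4 * N * (32 * Z ^ 5 *
        ((72 * (M : ℝ) ^ 3 * N ^ 2 / q + 1) * (3 * N + 12 * q * (1 + Real.log q)))) := by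
  have hN0 : (0 : ℝ) < N := by exact_mod_cast hN
  have h1 : ∀ x ∈ TR M, ‖VV N X α x.1 x.2.1 x.2.2‖ ^ 4 ≤ 16 * (N : ℝ) ^ 3 +
      4 * N * ∑ l ∈ HH0 N, ∑ l' ∈ HH0 N,
        G N (α * ((18 * x.1 * x.2.1 * (2 * x.2.2 + x.1 + x.2.1) * l * l' : ℤ) : ℝ)) := by
    intro x hx
    have hm := TR_mem hx
    unfold VV
    refine (weyl_one N hN N (JJ N X x.1 x.2.1 x.2.2)
      (JJ_ordConnected N X hN _ _ _ (by omega) (by omega) (by omega) (by omega))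
      (Finset.filter_subset _ _) _).trans (le_of_eq ?_)
    congr 2
    refine Finset.sum_congr rfl fun l _ => Finset.sum_congr rfl fun l' _ => ?_
    congr 1; push_cast; ring
  refine (Finset.sum_le_sum h1).trans ?_
  rw [Finset.sum_add_distrib, ← Finset.mul_sum (TR M) _ (4 * (N : ℝ))]
  have h2 : ∑ x ∈ TR M, 16 * (N : ℝ) ^ 3 ≤ 64 * (M : ℝ) ^ 3 * N ^ 3 := by
    rw [Finset.sum_const, nsmul_eq_mul]
    have := TR_card M
    calc ((TR M).card : ℝ) * (16 * (N : ℝ) ^ 3) ≤ (4 * (M : ℝ) ^ 3) * (16 * (N : ℝ) ^ 3) := by gcongr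
      _ = _ := by ring
  have h3 : ∑ x ∈ TR M, ∑ l ∈ HH0 N, ∑ l' ∈ HH0 N,
        G N (α * ((18 * x.1 * x.2.1 * (2 * x.2.2 + x.1 + x.2.1) * l * l' : ℤ) : ℝ)) ≤
      (32 * Z ^ 5) * ∑ k ∈ Finset.Icc (1 : ℕ) (72 * M ^ 3 * N ^ 2), G N (α * (k : ℝ)) := by
    have e0 : ∀ x : ℤ × ℤ × ℤ, ∑ l ∈ HH0 N, ∑ l' ∈ HH0 N,
        G N (α * ((18 * x.1 * x.2.1 * (2 * x.2.2 + x.1 + x.2.1) * l * l' : ℤ) : ℝ)) =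
        ∑ y ∈ HH0 N ×ˢ HH0 N,
        G N (α * ((18 * x.1 * x.2.1 * (2 * x.2.2 + x.1 + x.2.1) * y.1 * y.2 : ℤ) : ℝ)) := by
      intro x
      rw [Finset.sum_product]
    simp_rw [e0]
    rw [← Finset.sum_product' (TR M) (HH0 N ×ˢ HH0 N) (fun x y =>
      G N (α * ((18 * x.1 * x.2.1 * (2 * x.2.2 + x.1 + x.2.1) * y.1 * y.2 : ℤ) : ℝ)))]
    set κ : (ℤ × ℤ × ℤ) × (ℤ × ℤ) → ℕ := fun w =>
      (18 * w.1.1 * w.1.2.1 * (2 * w.1.2.2 + w.1.1 + w.1.2.1) * w.2.1 * w.2.2).natAbs with hκ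
    have e1 : ∀ w ∈ TR M ×ˢ (HH0 N ×ˢ HH0 N), G N (α * ((18 * w.1.1 * w.1.2.1 *
        (2 * w.1.2.2 + w.1.1 + w.1.2.1) * w.2.1 * w.2.2 : ℤ) : ℝ)) =
        (fun k : ℕ => G N (α * (k : ℝ))) (κ w) := fun w _ => G_natAbs _ _ _
    rw [Finset.sum_congr rfl e1]
    apply sum_fiber_le _ κ (72 * M ^ 3 * N ^ 2) (32 * Z ^ 5) (fun k : ℕ => G N (α * (k : ℝ)))
    · intro k; exact G_nonneg hN0 _
    · intro w hw
      obtain ⟨hw1, hw2⟩ := Finset.mem_product.1 hw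
      obtain ⟨hw3, hw4⟩ := Finset.mem_product.1 hw2
      have hm := TR_mem hw1
      have a1 := HH0_natAbs hm.1
      have a2 := HH0_natAbs hm.2.1
      have a3 := HH0_natAbs hw3
      have a4 := HH0_natAbs hw4
      have a5 : 1 ≤ (2 * w.1.2.2 + w.1.1 + w.1.2.1).natAbs ∧
          (2 * w.1.2.2 + w.1.1 + w.1.2.1).natAbs ≤ 4 * M := by omega
      simp only [hκ, Int.natAbs_mul]
      show 1 ≤ 18 * _ * _ * _ * _ * _ ∧ 18 * _ * _ * _ * _ * _ ≤ _
      constructor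
      · have : 0 < 18 * w.1.1.natAbs * w.1.2.1.natAbs * (2 * w.1.2.2 + w.1.1 + w.1.2.1).natAbs *
          w.2.1.natAbs * w.2.2.natAbs := by
          have b1 := a1.1; have b2 := a2.1; have b3 := a3.1; have b4 := a4.1; have b5 := a5.1
          positivity
        exact this
      · calc 18 * w.1.1.natAbs * w.1.2.1.natAbs * (2 * w.1.2.2 + w.1.1 + w.1.2.1).natAbs *
          w.2.1.natAbs * w.2.2.natAbs ≤ 18 * M * M * (4 * M) * N * N := by
              gcongr
              · exact a1.2
              · exact a2.2
              · exact a5.2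
              · exact a3.2
              · exact a4.2
          _ = 72 * M ^ 3 * N ^ 2 := by ring
    · intro k hk
      have hk' := Finset.mem_Icc.1 hk
      have hk0 : k ≠ 0 := by omega
      set D := zdiv k
      have h4 : ((TR M ×ˢ (HH0 N ×ˢ HH0 N)).filter (fun w => κ w = k)).card ≤
          (D ×ˢ D ×ˢ D ×ˢ D ×ˢ D).card := by
        refine Finset.card_le_card_of_injOn (fun w =>
          (w.1.1, w.1.2.1, 2 * w.1.2.2 + w.1.1 + w.1.2.1, w.2.1, w.2.2)) ?_ ?_
        · intro w hw
          have hw' := (Finset.mem_filter.1 hw).2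
          simp only [hκ, Int.natAbs_mul] at hw'
          simp only [Finset.coe_product, Set.mem_prod, Finset.mem_coe]
          refine ⟨?_, ?_, ?_, ?_, ?_⟩ <;> apply mem_zdiv hk0 <;> rw [← hw']
          · exact (((((dvd_mul_left _ _).mul_right _).mul_right _).mul_right _).mul_right _)
          · exact ((((dvd_mul_left _ _).mul_right _).mul_right _).mul_right _)
          · exact (((dvd_mul_left _ _).mul_right _).mul_right _)
          · exact ((dvd_mul_left _ _).mul_right _)
          · exact (dvd_mul_left _ _)
        · intro w _ w' _ hww
          simp only [Prod.mk.injEq] at hww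
          obtain ⟨⟨w1, w2, w3⟩, w4, w5⟩ := w
          obtain ⟨⟨v1, v2, v3⟩, v4, v5⟩ := w'
          simp only [Prod.mk.injEq] at hww ⊢
          refine ⟨⟨by omega, by omega, by omega⟩, by omega, by omega⟩
      have h5 : (D.card : ℝ) ≤ 2 * Z := by
        have := zdiv_card k
        have h6 : (D.card : ℝ) ≤ 2 * (k.divisors.card : ℝ) := by exact_mod_cast this
        have := hZ k hk0 hk'.2
        linarith
      simp only [Finset.card_product] at h4
      have h7 : ((((TR M ×ˢ (HH0 N ×ˢ HH0 N)).filter (fun w => κ w = k)).card : ℕ) : ℝ) ≤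
          (D.card : ℝ) * (D.card * (D.card * (D.card * D.card))) := by exact_mod_cast h4
      refine h7.trans ?_
      calc (D.card : ℝ) * (D.card * (D.card * (D.card * D.card))) = (D.card : ℝ) ^ 5 := by ring
        _ ≤ (2 * Z) ^ 5 := by gcongr
        _ = _ := by ring
  have h4 := vinogradov q hq a hg α hα N hN0 (72 * M ^ 3 * N ^ 2)
  have hZ0 : 0 ≤ Z := by
    have := hZ 1 one_ne_zero (by
      have : 0 < 72 * M ^ 3 * N ^ 2 := by positivity
      omega)
    simp at this; linarith
  refine add_le_add h2 (mul_le_mul_of_nonneg_left (h3.trans ?_) (by positivity))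
  refine mul_le_mul_of_nonneg_left ?_ (by positivity)
  refine h4.trans (le_of_eq ?_)
  push_cast; ring

lemma SS_pow {S M N A A4 B : ℝ} (hS : 0 ≤ S) (hM : 0 ≤ M) (hN : 0 ≤ N) (hA : 0 ≤ A) (hA4 : 0 ≤ A4)
    (s1 : S ^ 2 ≤ M * A) (s2 : A ^ 4 ≤ N ^ 6 * A4) (s3 : A4 ≤ B) :
    S ^ 16 ≤ (M ^ 4 * (N ^ 6 * B)) ^ 2 := by
  calc S ^ 16 = ((S ^ 2) ^ 4) ^ 2 := by ring
    _ ≤ ((M * A) ^ 4) ^ 2 := by gcongr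
    _ = (M ^ 4 * A ^ 4) ^ 2 := by ring
    _ ≤ (M ^ 4 * (N ^ 6 * A4)) ^ 2 := by gcongr
    _ ≤ _ := by gcongr

lemma SS_final (M N Z q W R1 : ℝ) (hM1 : 1 ≤ M) (hN1 : 1 ≤ N) (hq0 : 0 < q) (hZ1 : 1 ≤ Z)
    (hR10 : 0 ≤ R1)
    (s8 : W ^ 2 ≤ 4 * M ^ 3 * (64 * M ^ 3 * N ^ 3 + 4 * N * (32 * Z ^ 5 *
      (Z * (216 * R1 + 3459 * (M ^ 3 * N ^ 2) + 48 * q))))) :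
    (M ^ 4 * (N ^ 6 * (2 * M * (W + 4 * M ^ 2 * N ^ 2)))) ^ 2 ≤
      20000000 * Z ^ 6 * (M * N) ^ 13 * (M * N ^ 3 + M ^ 3 * N ^ 2 + R1 + q) := by
  have s10 : (M ^ 4 * (N ^ 6 * (2 * M * (W + 4 * M ^ 2 * N ^ 2)))) ^ 2 ≤
      8 * M ^ 10 * N ^ 12 * (W ^ 2 + 16 * M ^ 4 * N ^ 4) := by
    have : (W + 4 * M ^ 2 * N ^ 2) ^ 2 ≤ 2 * (W ^ 2 + 16 * M ^ 4 * N ^ 4) := by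
      nlinarith [sq_nonneg (W - 4 * M ^ 2 * N ^ 2)]
    calc (M ^ 4 * (N ^ 6 * (2 * M * (W + 4 * M ^ 2 * N ^ 2)))) ^ 2 =
        4 * M ^ 10 * N ^ 12 * (W + 4 * M ^ 2 * N ^ 2) ^ 2 := by ring
      _ ≤ 4 * M ^ 10 * N ^ 12 * (2 * (W ^ 2 + 16 * M ^ 4 * N ^ 4)) := by gcongr
      _ = _ := by ring
  refine s10.trans ?_
  have hZ6 : 1 ≤ Z ^ 6 := one_le_pow₀ hZ1
  have e1 : M ^ 3 * N ^ 2 ≤ Z ^ 6 * (M ^ 3 * N ^ 2) :=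
    le_mul_of_one_le_left (by positivity) hZ6
  have e2 : M * N ^ 3 ≤ Z ^ 6 * (M * N ^ 3) :=
    le_mul_of_one_le_left (by positivity) hZ6
  have e3 : 0 ≤ Z ^ 6 * R1 := by positivity
  have e4 : 0 ≤ Z ^ 6 * q := by positivity
  have e5 : 0 ≤ Z ^ 6 * (M ^ 3 * N ^ 2) := by positivity
  have e6 : 0 ≤ Z ^ 6 * (M * N ^ 3) := by positivity
  calc 8 * M ^ 10 * N ^ 12 * (W ^ 2 + 16 * M ^ 4 * N ^ 4) ≤
      8 * M ^ 10 * N ^ 12 * (4 * M ^ 3 * (64 * M ^ 3 * N ^ 3 + 4 * N * (32 * Z ^ 5 *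
      (Z * (216 * R1 + 3459 * (M ^ 3 * N ^ 2) + 48 * q)))) + 16 * M ^ 4 * N ^ 4) := by
        refine mul_le_mul_of_nonneg_left (add_le_add s8 le_rfl) (by positivity)
    _ = (M * N) ^ 13 * (2048 * (M ^ 3 * N ^ 2) + 128 * (M * N ^ 3) +
        4096 * (216 * (Z ^ 6 * R1) + 3459 * (Z ^ 6 * (M ^ 3 * N ^ 2)) + 48 * (Z ^ 6 * q))) := by
        ring
    _ ≤ (M * N) ^ 13 * (20000000 * (Z ^ 6 * (M * N ^ 3) + Z ^ 6 * (M ^ 3 * N ^ 2) + Z ^ 6 * R1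
          + Z ^ 6 * q)) := by
        refine mul_le_mul_of_nonneg_left ?_ (by positivity)
        linarith
    _ = _ := by ring

lemma SS_bound (M N X : ℕ) (hM : 1 ≤ M) (hN : 1 ≤ N) (α : ℝ) (a : ℤ) (q : ℕ) (hq : 1 ≤ q)
    (hg : Int.gcd a q = 1) (hα : |α - (a : ℝ) / (q : ℝ)| ≤ 1 / (q : ℝ) ^ 2)
    (Z : ℝ) (hZ1 : 1 ≤ Z) (hlog : 1 + Real.log q ≤ 4 * Z)
    (hZ : ∀ k : ℕ, k ≠ 0 → k ≤ 72 * M ^ 3 * N ^ 2 → (k.divisors.card : ℝ) ≤ Z)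
    (u v : ℤ → ℂ) (hu : ∀ m, ‖u m‖ ≤ 1) (hv : ∀ n, ‖v n‖ ≤ 1) :
    ‖SS M N X α u v‖ ^ 16 ≤ 20000000 * Z ^ 6 * ((M : ℝ) * N) ^ 13 *
      (M * N ^ 3 + M ^ 3 * N ^ 2 + M ^ 3 * N ^ 3 / q + q) := by
  have hN1 : (1 : ℝ) ≤ N := by exact_mod_cast hN
  have hM1 : (1 : ℝ) ≤ M := by exact_mod_cast hM
  have hq0 : (0 : ℝ) < q := by exact_mod_cast hq
  set W := ∑ x ∈ TR M, ‖VV N X α x.1 x.2.1 x.2.2‖ ^ 2 with hW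
  set A := ∑ n₁ ∈ BB N, ∑ n₂ ∈ BB N, ‖TT M X α n₁ n₂‖ with hA
  set A4 := ∑ n₁ ∈ BB N, ∑ n₂ ∈ BB N, ‖TT M X α n₁ n₂‖ ^ 4 with hA4
  have hA0 : 0 ≤ A := Finset.sum_nonneg fun _ _ => Finset.sum_nonneg fun _ _ => norm_nonneg _
  have hA40 : 0 ≤ A4 := Finset.sum_nonneg fun _ _ => Finset.sum_nonneg fun _ _ => by positivity
  have hW0 : 0 ≤ W := Finset.sum_nonneg fun _ _ => by positivity
  have s1 : ‖SS M N X α u v‖ ^ 2 ≤ M * A := SS_step1 M N X α u v hu hv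
  have s2 : A ^ 4 ≤ (N : ℝ) ^ 6 * A4 := SS_step2 N hN _ (fun _ _ => norm_nonneg _)
  have s3 : A4 ≤ 2 * M * (W + 4 * M ^ 2 * N ^ 2) := by
    refine (SS_step3 M N X α).trans ?_
    gcongr
    have h := sum_HH2_split M (M * N ^ 2) (by positivity)
      (fun h h' => ∑ m ∈ I4 (BB M) h h', ‖VV N X α h h' m‖ ^ 2) (fun h h' => by
        calc ∑ m ∈ I4 (BB M) h h', ‖VV N X α h h' m‖ ^ 2 ≤ ∑ m ∈ I4 (BB M) h h', (N : ℝ) ^ 2 :=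
              Finset.sum_le_sum fun m _ => by
                have := VV_norm N X α h h' m
                gcongr
          _ = (I4 (BB M) h h').card * (N : ℝ) ^ 2 := by simp
          _ ≤ M * N ^ 2 := by
              gcongr
              have : (I4 (BB M) h h').card ≤ (BB M).card := by
                apply Finset.card_le_card
                intro m hm; exact (mem_I4.1 hm).1
              rwa [BB_card] at this)
    rw [sum_TR M (fun h h' m => ‖VV N X α h h' m‖ ^ 2)] at h
    refine h.trans (le_of_eq ?_)
    ring
  have s5 : W ^ 2 ≤ 4 * M ^ 3 * ∑ x ∈ TR M, ‖VV N X α x.1 x.2.1 x.2.2‖ ^ 4 := by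
    have h1 : W ^ 2 ≤ (TR M).card * ∑ x ∈ TR M, (‖VV N X α x.1 x.2.1 x.2.2‖ ^ 2) ^ 2 :=
      sq_sum_le_card_mul_sum_sq
    have h2 : ∀ x ∈ TR M, (‖VV N X α x.1 x.2.1 x.2.2‖ ^ 2) ^ 2 = ‖VV N X α x.1 x.2.1 x.2.2‖ ^ 4 :=
      fun x _ => by ring
    rw [Finset.sum_congr rfl h2] at h1
    refine h1.trans ?_
    have : 0 ≤ ∑ x ∈ TR M, ‖VV N X α x.1 x.2.1 x.2.2‖ ^ 4 := Finset.sum_nonneg fun _ _ => by positivity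
    gcongr
    exact TR_card M
  have s6 := SS_step6 M N X hM hN α a q hq hg hα Z hZ
  have s7 : (72 * (M : ℝ) ^ 3 * N ^ 2 / q + 1) * (3 * N + 12 * q * (1 + Real.log q)) ≤
      Z * (216 * (M ^ 3 * N ^ 3 / q) + 3459 * (M ^ 3 * N ^ 2) + 48 * q) := by
    have e0 : (72 * (M : ℝ) ^ 3 * N ^ 2 / q + 1) * (3 * N + 12 * q * (1 + Real.log q)) ≤
      (72 * (M : ℝ) ^ 3 * N ^ 2 / q + 1) * (3 * N + 48 * q * Z) := by
      gcongr _ * (_ + ?_)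
      nlinarith
    refine e0.trans ?_
    have e1 : (72 * (M : ℝ) ^ 3 * N ^ 2 / q + 1) * (3 * N + 48 * q * Z) =
      216 * (M ^ 3 * N ^ 3 / q) + 3456 * (M ^ 3 * N ^ 2) * Z + 3 * N + 48 * q * Z := by
      field_simp; ring
    rw [e1]
    have e2 : (M : ℝ) ^ 3 * N ^ 3 / q ≤ Z * (M ^ 3 * N ^ 3 / q) :=
      le_mul_of_one_le_left (by positivity) hZ1
    have e3 : (N : ℝ) ≤ Z * (M ^ 3 * N ^ 2) := by
      have f1 : (1 : ℝ) ≤ M ^ 3 := one_le_pow₀ hM1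
      have f2 : (N : ℝ) ≤ N ^ 2 := by nlinarith
      have f3 : (N : ℝ) ^ 2 ≤ M ^ 3 * N ^ 2 := le_mul_of_one_le_left (by positivity) f1
      have f4 : (M : ℝ) ^ 3 * N ^ 2 ≤ Z * (M ^ 3 * N ^ 2) :=
        le_mul_of_one_le_left (by positivity) hZ1
      linarith
    linarith
  set R1 := (M : ℝ) ^ 3 * N ^ 3 / q with hR1
  have hR10 : 0 ≤ R1 := by positivity
  have s8 : W ^ 2 ≤ 4 * M ^ 3 * (64 * (M : ℝ) ^ 3 * N ^ 3 + 4 * N * (32 * Z ^ 5 *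
      (Z * (216 * R1 + 3459 * (M ^ 3 * N ^ 2) + 48 * q)))) := by
    refine s5.trans ?_
    gcongr
    refine s6.trans ?_
    gcongr
  have s9 : ‖SS M N X α u v‖ ^ 16 ≤ (M ^ 4 * (N ^ 6 * (2 * M * (W + 4 * M ^ 2 * N ^ 2)))) ^ 2 := by
    exact SS_pow (norm_nonneg _) (by positivity) (by positivity) hA0 hA40 s1 s2 s3
  exact s9.trans (SS_final M N Z q W R1 hM1 hN1 hq0 hZ1 hR10 s8)

end MinorArc


namespace MinorArc

/-- standing hypotheses -/
structure Ctx (X : ℕ) (α : ℝ) (a : ℤ) (q : ℕ) (Z δ : ℝ) : Prop where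
  hX : 1 ≤ X
  hq : 1 ≤ q
  hg : Int.gcd a q = 1
  hα : |α - (a : ℝ) / (q : ℝ)| ≤ 1 / (q : ℝ) ^ 2
  hZ1 : 1 ≤ Z
  hlog : 1 + Real.log X ≤ Z
  hZ : ∀ k : ℕ, k ≠ 0 → k ≤ 100 * X ^ 10 → (k.divisors.card : ℝ) ≤ Z
  hδ0 : 0 < δ
  hδ1 : δ ≤ 1
  h1 : 1 ≤ (X : ℝ) * δ ^ 32
  h2 : 1 ≤ (q : ℝ) * δ ^ 16
  h3 : (q : ℝ) ≤ (X : ℝ) ^ 3 * δ ^ 16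

lemma Ctx.X1 {X : ℕ} {α : ℝ} {a : ℤ} {q : ℕ} {Z δ : ℝ} (c : Ctx X α a q Z δ) : (1 : ℝ) ≤ X := by
  exact_mod_cast c.hX

lemma Ctx.logq {X : ℕ} {α : ℝ} {a : ℤ} {q : ℕ} {Z δ : ℝ} (c : Ctx X α a q Z δ) :
    1 + Real.log q ≤ 4 * Z := by
  have hX := c.X1
  have h0 := c.hδ0
  have hd : δ ^ 16 ≤ 1 := pow_le_one₀ h0.le c.hδ1
  have h1 : (q : ℝ) ≤ (X : ℝ) ^ 3 := c.h3.trans (mul_le_of_le_one_right (by positivity) hd)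
  have h2 : Real.log q ≤ 3 * Real.log X := by
    have hq : (0 : ℝ) < q := by exact_mod_cast c.hq
    have := Real.log_le_log hq h1
    rw [Real.log_pow] at this
    exact_mod_cast this
  have := c.hlog
  have := c.hZ1
  linarith

lemma SS_symm (M N X : ℕ) (α : ℝ) (u v : ℤ → ℂ) : SS M N X α u v = SS N M X α v u := by
  unfold SS
  rw [Finset.sum_comm]
  refine Finset.sum_congr rfl fun n _ => Finset.sum_congr rfl fun m _ => ?_
  rw [mul_comm m n, mul_comm (u m)]

lemma box_real (M N X q δ Z S s : ℝ) (hM : 1 ≤ M) (hMN : M ≤ N) (hP : M * N ≤ X)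
    (hMX : X ≤ 16 * M ^ 4) (hq : 0 < q) (hZ : 1 ≤ Z) (hδ : 0 < δ)
    (hs : s ^ 2 = X) (hs0 : 0 < s) (h1 : 1 ≤ s * δ ^ 16) (h2 : 1 ≤ q * δ ^ 16)
    (h3 : q ≤ X ^ 3 * δ ^ 16) (hS : 0 ≤ S)
    (hb : S ^ 16 ≤ 20000000 * Z ^ 6 * (M * N) ^ 13 *
      (M * N ^ 3 + M ^ 3 * N ^ 2 + M ^ 3 * N ^ 3 / q + q)) : S ≤ 4 * Z * X * δ := by
  have hN : 1 ≤ N := hM.trans hMN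
  have hX0 : 0 < X := by rw [← hs]; positivity
  have hMs : s ≤ 4 * M ^ 2 := by
    have : s ^ 2 ≤ (4 * M ^ 2) ^ 2 := by rw [hs]; linarith
    exact le_of_sq_le_sq this (by positivity)
  have hMs' : M ≤ s := by
    have : M ^ 2 ≤ s ^ 2 := by rw [hs]; nlinarith
    exact le_of_sq_le_sq this (by positivity)
  have hP3 : (M * N) ^ 3 ≤ X ^ 3 := by gcongr
  have d1 : M * N ^ 3 ≤ 4 * (X ^ 3 * δ ^ 16) := by
    calc M * N ^ 3 ≤ (M * N ^ 3) * (s * δ ^ 16) := le_mul_of_one_le_right (by positivity) h1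
      _ ≤ (M * N ^ 3) * ((4 * M ^ 2) * δ ^ 16) := by gcongr
      _ = 4 * ((M * N) ^ 3 * δ ^ 16) := by ring
      _ ≤ _ := by gcongr
  have d2 : M ^ 3 * N ^ 2 ≤ X ^ 3 * δ ^ 16 := by
    calc M ^ 3 * N ^ 2 = (M * N) ^ 2 * M := by ring
      _ ≤ X ^ 2 * s := by gcongr
      _ ≤ (X ^ 2 * s) * (s * δ ^ 16) := le_mul_of_one_le_right (by positivity) h1
      _ = X ^ 2 * s ^ 2 * δ ^ 16 := by ring
      _ = _ := by rw [hs]; ring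
  have d3 : M ^ 3 * N ^ 3 / q ≤ X ^ 3 * δ ^ 16 := by
    rw [div_le_iff₀ hq]
    calc M ^ 3 * N ^ 3 = (M * N) ^ 3 := by ring
      _ ≤ X ^ 3 := hP3
      _ ≤ X ^ 3 * (q * δ ^ 16) := le_mul_of_one_le_right (by positivity) h2
      _ = _ := by ring
  have hZ6 : Z ^ 6 ≤ Z ^ 16 := pow_le_pow_right₀ hZ (by norm_num)
  have : S ^ 16 ≤ (4 * Z * X * δ) ^ 16 := by
    calc S ^ 16 ≤ _ := hb
      _ ≤ 20000000 * Z ^ 16 * X ^ 13 * (7 * (X ^ 3 * δ ^ 16)) := by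
          gcongr
          linarith
      _ = 140000000 * (Z ^ 16 * X ^ 16 * δ ^ 16) := by ring
      _ ≤ 4294967296 * (Z ^ 16 * X ^ 16 * δ ^ 16) := by gcongr; norm_num
      _ = _ := by ring
  exact le_of_pow_le_pow_left₀ (by norm_num) (by positivity) this

lemma box_bound' {X : ℕ} {α : ℝ} {a : ℤ} {q : ℕ} {Z δ : ℝ} (c : Ctx X α a q Z δ) (M N : ℕ)
    (hM : 1 ≤ M) (hMN : M ≤ N) (hP : M * N ≤ X) (hMX : X ≤ 16 * M ^ 4)
    (u v : ℤ → ℂ) (hu : ∀ m, ‖u m‖ ≤ 1) (hv : ∀ n, ‖v n‖ ≤ 1) :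
    ‖SS M N X α u v‖ ≤ 4 * Z * X * δ := by
  have hX := c.X1
  have h0 := c.hδ0
  have hs : Real.sqrt X ^ 2 = X := Real.sq_sqrt (by positivity)
  have hs0 : 0 < Real.sqrt X := Real.sqrt_pos.2 (by positivity)
  refine box_real M N X q δ Z _ (Real.sqrt X) (by exact_mod_cast hM) (by exact_mod_cast hMN)
    (by exact_mod_cast hP) (by exact_mod_cast hMX) (by exact_mod_cast c.hq) c.hZ1 c.hδ0 hs hs0
    ?_ c.h2 c.h3 (norm_nonneg _)
    (SS_bound M N X hM (hM.trans hMN) α a q c.hq c.hg c.hα Z c.hZ1 c.logq ?_ u v hu hv)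
  · have : 1 ≤ (Real.sqrt X * δ ^ 16) ^ 2 := by
      rw [mul_pow, hs, ← pow_mul]; exact c.h1
    exact (one_le_sq_iff₀ (by positivity)).1 this
  · intro k hk hk2
    refine c.hZ k hk (hk2.trans ?_)
    have hM' : M ≤ X := le_trans (Nat.le_mul_of_pos_right M (by omega)) hP
    calc 72 * M ^ 3 * N ^ 2 = 72 * ((M * N) ^ 2 * M) := by ring
      _ ≤ 100 * (X ^ 2 * X) := by gcongr; norm_num
      _ = 100 * X ^ 3 := by ring
      _ ≤ _ := by
        gcongr
        · exact c.hX
        · norm_num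

lemma box_bound {X : ℕ} {α : ℝ} {a : ℤ} {q : ℕ} {Z δ : ℝ} (c : Ctx X α a q Z δ) (M N : ℕ)
    (hM : 1 ≤ M) (hN : 1 ≤ N) (hP : M * N ≤ X) (hMX : X ≤ 16 * M ^ 4) (hNX : X ≤ 16 * N ^ 4)
    (u v : ℤ → ℂ) (hu : ∀ m, ‖u m‖ ≤ 1) (hv : ∀ n, ‖v n‖ ≤ 1) :
    ‖SS M N X α u v‖ ≤ 4 * Z * X * δ := by
  rcases le_total M N with h | h
  · exact box_bound' c M N hM h hP hMX u v hu hv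
  · rw [SS_symm]
    exact box_bound' c N M hN h (by rwa [mul_comm]) hNX v u hv hu

lemma sum_dyadic {A : Type*} [AddCommMonoid A] (f : ℕ → A) (L : ℕ) :
    ∑ i ∈ Finset.range L, ∑ m ∈ Finset.Ico (2 ^ i) (2 ^ i + 2 ^ i), f m =
      ∑ m ∈ Finset.Ico 1 (2 ^ L), f m := by
  induction L with
  | zero => simp
  | succ L ih =>
    rw [Finset.sum_range_succ, ih, show 2 ^ L + 2 ^ L = 2 ^ (L + 1) by ring]
    exact Finset.sum_Ico_consecutive f Nat.one_le_two_pow (Nat.pow_le_pow_right (by norm_num) (by omega))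

lemma sum_BB {A : Type*} [AddCommMonoid A] (f : ℤ → A) (M : ℕ) :
    ∑ m ∈ BB M, f m = ∑ m ∈ Finset.Ico M (M + M), f (m : ℤ) := by
  have : BB M = (Finset.Ico M (M + M)).image (fun m : ℕ => (m : ℤ)) := by
    unfold BB
    ext x
    simp only [Finset.mem_Ico, Finset.mem_image]
    constructor
    · intro h
      exact ⟨x.toNat, by omega, by omega⟩
    · rintro ⟨m, hm, rfl⟩
      omega
  rw [this, Finset.sum_image (fun _ _ _ _ h => by exact_mod_cast h)]

lemma sum_Icc_dyadic {A : Type*} [AddCommMonoid A] (X : ℕ) (f : ℕ → A) (hf : ∀ m, X < m → f m = 0) :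
    ∑ m ∈ Finset.Icc 1 X, f m = ∑ i ∈ Finset.range (Nat.log 2 X + 1), ∑ m ∈ BB (2 ^ i), f m.toNat := by
  have h : ∀ i, ∑ m ∈ BB (2 ^ i), f m.toNat = ∑ m ∈ Finset.Ico (2 ^ i) (2 ^ i + 2 ^ i), f m := by
    intro i
    rw [sum_BB]
    simp
  simp_rw [h]
  rw [sum_dyadic]
  apply Finset.sum_subset
  · intro m hm
    rw [Finset.mem_Icc] at hm
    rw [Finset.mem_Ico]
    exact ⟨hm.1, hm.2.trans_lt (Nat.lt_pow_succ_log_self (by norm_num) X)⟩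
  · intro m hm hm'
    rw [Finset.mem_Icc] at hm'
    rw [Finset.mem_Ico] at hm
    exact hf m (by omega)

lemma log_count {X : ℕ} {α : ℝ} {a : ℤ} {q : ℕ} {Z δ : ℝ} (c : Ctx X α a q Z δ) :
    ((Nat.log 2 X + 1 : ℕ) : ℝ) ≤ 2 * Z := by
  have h1 : 2 ^ (Nat.log 2 X) ≤ X := Nat.pow_log_le_self 2 (by have := c.hX; omega)
  have h2 : ((2 : ℝ) ^ (Nat.log 2 X)) ≤ X := by exact_mod_cast h1
  have h3 := Real.log_le_log (by positivity) h2
  rw [Real.log_pow] at h3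
  have h4 := Real.log_two_gt_d9
  have h5 := c.hlog
  have h6 := c.hZ1
  have h7 : (0 : ℝ) ≤ (Nat.log 2 X : ℝ) := by positivity
  push_cast
  nlinarith

/-- type II estimate -/
lemma typeII {X : ℕ} {α : ℝ} {a : ℤ} {q : ℕ} {Z δ : ℝ} (c : Ctx X α a q Z δ) (U : ℕ)
    (hU : X < (U + 1) ^ 4)
    (u v : ℕ → ℂ) (hu : ∀ m, ‖u m‖ ≤ 1) (hv : ∀ n, ‖v n‖ ≤ 1)
    (hu0 : ∀ m ≤ U, u m = 0) (hv0 : ∀ m ≤ U, v m = 0) :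
    ‖∑ m ∈ Finset.Icc 1 X, ∑ n ∈ Finset.Icc 1 X,
      if m * n ≤ X then u m * v n * eexp (α * ((m * n : ℕ) : ℝ) ^ 3) else 0‖ ≤ 16 * Z ^ 3 * X * δ := by
  set L := Nat.log 2 X + 1
  have e1 : ∑ m ∈ Finset.Icc 1 X, ∑ n ∈ Finset.Icc 1 X,
      (if m * n ≤ X then u m * v n * eexp (α * ((m * n : ℕ) : ℝ) ^ 3) else 0) =
      ∑ i ∈ Finset.range L, ∑ j ∈ Finset.range L,
        SS (2 ^ i) (2 ^ j) X α (fun m => u m.toNat) (fun m => v m.toNat) := by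
    have f1 : ∀ m ∈ Finset.Icc 1 X, ∑ n ∈ Finset.Icc 1 X,
      (if m * n ≤ X then u m * v n * eexp (α * ((m * n : ℕ) : ℝ) ^ 3) else 0) =
      ∑ j ∈ Finset.range L, ∑ n ∈ BB (2 ^ j),
      (if m * n.toNat ≤ X then u m * v n.toNat * eexp (α * ((m * n.toNat : ℕ) : ℝ) ^ 3) else 0) := by
      intro m hm
      rw [Finset.mem_Icc] at hm
      refine sum_Icc_dyadic X (fun n => if m * n ≤ X then u m * v n * eexp (α * ((m * n : ℕ) : ℝ) ^ 3) else 0) ?_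
      intro n hn
      rw [if_neg]
      have : n ≤ m * n := Nat.le_mul_of_pos_left n hm.1
      omega
    rw [Finset.sum_congr rfl f1, Finset.sum_comm]
    rw [Finset.sum_comm (s := Finset.range L) (t := Finset.range L)]
    refine Finset.sum_congr rfl fun j _ => ?_
    rw [sum_Icc_dyadic X (fun m => ∑ n ∈ BB (2 ^ j),
      (if m * n.toNat ≤ X then u m * v n.toNat * eexp (α * ((m * n.toNat : ℕ) : ℝ) ^ 3) else 0))]
    · refine Finset.sum_congr rfl fun i _ => ?_
      unfold SS
      refine Finset.sum_congr rfl fun m hm => Finset.sum_congr rfl fun n hn => ?_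
      have hm' : 0 ≤ m := by
        have := (Finset.mem_Ico.1 hm).1
        exact le_trans (by positivity) this
      have hn' : 0 ≤ n := by
        have := (Finset.mem_Ico.1 hn).1
        exact le_trans (by positivity) this
      lift m to ℕ using hm'
      lift n to ℕ using hn'
      simp only [Int.toNat_natCast]
      norm_cast
    · intro m hm
      refine Finset.sum_eq_zero fun n hn => ?_
      rw [if_neg]
      have h1 := (Finset.mem_Ico.1 hn).1
      have h2 : (1 : ℤ) ≤ ((2 ^ j : ℕ) : ℤ) := by exact_mod_cast Nat.one_le_two_pow
      have h3 : 1 ≤ n.toNat := by omega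
      have : m ≤ m * n.toNat := Nat.le_mul_of_pos_right m h3
      omega
  rw [e1]
  have hX := c.X1
  have h0 := c.hδ0
  have hZ1 := c.hZ1
  have e2 : ∀ i j, ‖SS (2 ^ i) (2 ^ j) X α (fun m => u m.toNat) (fun m => v m.toNat)‖ ≤
      4 * Z * X * δ := by
    intro i j
    have z0 : 0 ≤ 4 * Z * X * δ := by positivity
    have hpos : ∀ i, 1 ≤ 2 ^ i := fun i => Nat.one_le_two_pow
    by_cases h1 : 2 ^ i * 2 ^ j ≤ X
    · by_cases h2 : U < 2 ^ i + 2 ^ i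
      · by_cases h3 : U < 2 ^ j + 2 ^ j
        · refine box_bound c _ _ (hpos i) (hpos j) h1 ?_ ?_ _ _ (fun m => hu _) (fun m => hv _)
          · refine hU.le.trans ?_
            calc (U + 1) ^ 4 ≤ (2 * 2 ^ i) ^ 4 := by gcongr; omega
              _ = _ := by ring
          · refine hU.le.trans ?_
            calc (U + 1) ^ 4 ≤ (2 * 2 ^ j) ^ 4 := by gcongr; omega
              _ = _ := by ring
        · have : SS (2 ^ i) (2 ^ j) X α (fun m => u m.toNat) (fun m => v m.toNat) = 0 := by
            refine Finset.sum_eq_zero fun m hm => Finset.sum_eq_zero fun n hn => ?_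
            have := (Finset.mem_Ico.1 hn).2
            beta_reduce
            rw [hv0 n.toNat (by push_cast at this; zify at h3; omega)]
            simp
          rw [this, norm_zero]; exact z0
      · have : SS (2 ^ i) (2 ^ j) X α (fun m => u m.toNat) (fun m => v m.toNat) = 0 := by
          refine Finset.sum_eq_zero fun m hm => Finset.sum_eq_zero fun n hn => ?_
          have := (Finset.mem_Ico.1 hm).2
          beta_reduce
          rw [hu0 m.toNat (by push_cast at this; zify at h2; omega)]
          simp
        rw [this, norm_zero]; exact z0
    · have : SS (2 ^ i) (2 ^ j) X α (fun m => u m.toNat) (fun m => v m.toNat) = 0 := by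
        refine Finset.sum_eq_zero fun m hm => Finset.sum_eq_zero fun n hn => ?_
        rw [if_neg]
        have a1 := (Finset.mem_Ico.1 hm).1
        have a2 := (Finset.mem_Ico.1 hn).1
        have a3 : ((2 ^ i : ℕ) : ℤ) * ((2 ^ j : ℕ) : ℤ) ≤ m * n := by gcongr; exact le_trans (by positivity) a1
        have a4 : (X : ℤ) < ((2 ^ i : ℕ) : ℤ) * ((2 ^ j : ℕ) : ℤ) := by exact_mod_cast (not_le.1 h1)
        omega
      rw [this, norm_zero]; exact z0
  calc _ ≤ ∑ i ∈ Finset.range L, ∑ j ∈ Finset.range L, 4 * Z * X * δ :=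
        (norm_sum_le _ _).trans (Finset.sum_le_sum fun i _ =>
          (norm_sum_le _ _).trans (Finset.sum_le_sum fun j _ => e2 i j))
    _ = (L : ℝ) ^ 2 * (4 * Z * X * δ) := by simp; ring
    _ ≤ (2 * Z) ^ 2 * (4 * Z * X * δ) := by
        have := log_count c
        gcongr
    _ = _ := by ring

end MinorArc


namespace MinorArc

lemma floor_facts (X m : ℕ) (hm : 1 ≤ m) (hm4 : m ^ 4 ≤ X) :
    1 ≤ X / m ∧ X ≤ 2 * m * (X / m) ∧ X ≤ (X / m) ^ 3 ∧ X / m ≤ X ∧ m * (X / m) ≤ X := by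
  set N := X / m with hN
  have h1 : m * N ≤ X := Nat.mul_div_le X m
  have h2 : X < m * (N + 1) := by
    have := Nat.lt_mul_div_succ X (show 0 < m by omega)
    exact this
  have h3 : m ^ 3 ≤ N := by
    rw [hN, Nat.le_div_iff_mul_le (by omega)]
    calc m ^ 3 * m = m ^ 4 := by ring
      _ ≤ X := hm4
  have h4 : m ≤ m ^ 3 := Nat.le_self_pow (by norm_num) m
  have h5 : 1 ≤ N := by omega
  refine ⟨h5, by nlinarith, ?_, Nat.div_le_self _ _, h1⟩
  have h6 : X + 1 ≤ N * (N + 1) := by nlinarith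
  obtain ⟨t, ht⟩ : ∃ t, N = t + 1 := ⟨N - 1, by omega⟩
  rw [ht] at h6 ⊢
  nlinarith [Nat.zero_le (t^3), Nat.zero_le (t^2)]

lemma typeI_dir {X : ℕ} {α : ℝ} {a : ℤ} {q : ℕ} {Z δ : ℝ} (c : Ctx X α a q Z δ) (m : ℕ)
    (hm : 1 ≤ m) (hm4 : m ^ 4 ≤ X) :
    ∃ ρ : ℚ, ρ.den ≤ X ^ 3 ∧ |α - ((ρ / (m : ℚ) ^ 3 : ℚ) : ℝ)| ≤ 8 / ((X : ℝ) ^ 3 * δ ^ 4 * ρ.den) ∧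
      ∀ Y ≤ X / m, ‖∑ n ∈ Finset.Icc 1 Y, eexp (α * ((m * n : ℕ) : ℝ) ^ 3)‖ ^ 4 ≤
        10000 * Z ^ 3 * ((X / m : ℕ) : ℝ) ^ 4 * (2 * δ ^ 4 + 1 / (ρ.den : ℝ)) := by
  obtain ⟨hN1, hN2, hN3, hN4, hN5⟩ := floor_facts X m hm hm4
  set N := X / m with hN
  have hX := c.X1
  have h0 := c.hδ0
  have hδ1 := c.hδ1
  have hm' : (1 : ℝ) ≤ m := by exact_mod_cast hm
  have hN1' : (1 : ℝ) ≤ N := by exact_mod_cast hN1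
  have hN2' : (X : ℝ) ≤ 2 * m * N := by exact_mod_cast hN2
  have hN3' : (X : ℝ) ≤ (N : ℝ) ^ 3 := by exact_mod_cast hN3
  have hN4' : (N : ℝ) ≤ X := by exact_mod_cast hN4
  set E := δ ^ 4 with hE
  have hE0 : 0 < E := by positivity
  have hE1 : E ≤ 1 := pow_le_one₀ h0.le hδ1
  have hXE : 1 ≤ X * E ^ 8 := by rw [hE, ← pow_mul]; exact c.h1
  have hNE : 1 ≤ N * E := by
    have : 1 ≤ (N * E) ^ 8 := by
      calc 1 ≤ X * E ^ 8 := hXE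
        _ ≤ (N : ℝ) ^ 3 * E ^ 8 := by gcongr
        _ ≤ (N : ℝ) ^ 8 * E ^ 8 := by gcongr; norm_num
        _ = _ := by ring
    exact (one_le_pow_iff_of_nonneg (by positivity) (by norm_num)).1 this
  have hN3E : 1 ≤ (N : ℝ) ^ 3 * E := by
    refine hNE.trans ?_
    gcongr
    exact le_self_pow₀ hN1' (by norm_num)
  set n := ⌊(N : ℝ) ^ 3 * E⌋₊ with hn
  have hnpos : 0 < n := Nat.floor_pos.2 hN3E
  obtain ⟨ρ, hρ1, hρ2⟩ := Real.exists_rat_abs_sub_le_and_den_le (α * (m : ℝ) ^ 3) hnpos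
  have hr1 : 1 ≤ ρ.den := ρ.pos
  have hr1' : (1 : ℝ) ≤ ρ.den := by exact_mod_cast hr1
  have hnle : (n : ℝ) ≤ (N : ℝ) ^ 3 * E := Nat.floor_le (by positivity)
  have hrle : (ρ.den : ℝ) ≤ (N : ℝ) ^ 3 * E := le_trans (by exact_mod_cast hρ2) hnle
  have hnlt : (N : ℝ) ^ 3 * E ≤ (n : ℝ) + 1 := (Nat.lt_floor_add_one _).le
  have hrX : ρ.den ≤ X ^ 3 := by
    have : (ρ.den : ℝ) ≤ (X : ℝ) ^ 3 := by
      refine hrle.trans ((mul_le_of_le_one_right (by positivity) hE1).trans ?_)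
      gcongr
    exact_mod_cast this
  refine ⟨ρ, hrX, ?_, ?_⟩
  · have e1 : α - ((ρ / (m : ℚ) ^ 3 : ℚ) : ℝ) = (α * (m : ℝ) ^ 3 - ρ) / (m : ℝ) ^ 3 := by
      push_cast; field_simp
    rw [e1, abs_div, abs_of_pos (show (0 : ℝ) < (m : ℝ) ^ 3 by positivity), div_le_iff₀ (by positivity)]
    refine hρ1.trans ?_
    rw [div_mul_eq_mul_div, div_le_div_iff₀ (by positivity) (by positivity)]
    calc 1 * ((X : ℝ) ^ 3 * E * ρ.den) ≤ ((2 * m * N) ^ 3) * E * ρ.den := by rw [one_mul]; gcongr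
      _ = 8 * (m : ℝ) ^ 3 * ((N : ℝ) ^ 3 * E * ρ.den) := by ring
      _ ≤ _ := by gcongr
  · intro Y hY
    have hsum : ∑ n ∈ Finset.Icc 1 Y, eexp (α * ((m * n : ℕ) : ℝ) ^ 3) =
        ∑ n ∈ Finset.Icc 1 Y, eexp ((α * (m : ℝ) ^ 3) * (n : ℝ) ^ 3) := by
      refine Finset.sum_congr rfl fun n _ => ?_
      congr 1; push_cast; ring
    rw [hsum]
    refine (weyl_cubic N hN1 Y hY (α * (m : ℝ) ^ 3) ρ.num ρ.den hr1 ρ.reduced ?_ Z c.hZ1 ?_ ?_).trans ?_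
    · have : ((ρ.num : ℝ) / (ρ.den : ℝ)) = (ρ : ℝ) := by
        rw [Rat.cast_def]
      rw [this]
      refine hρ1.trans ?_
      rw [sq]
      gcongr
      have : (ρ.den : ℝ) ≤ n := by exact_mod_cast hρ2
      linarith
    · have h5 := Real.log_le_log (by positivity) (show (ρ.den : ℝ) ≤ (X : ℝ) ^ 3 by exact_mod_cast hrX)
      rw [Real.log_pow] at h5
      have := c.hlog
      have := c.hZ1
      push_cast at h5
      linarith
    · intro k hk hk2
      refine c.hZ k hk (hk2.trans ?_)
      calc 6 * N ^ 2 ≤ 100 * X ^ 2 := by gcongr; norm_num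
        _ ≤ _ := by
          gcongr
          · exact c.hX
          · norm_num
    · have hZ1 := c.hZ1
      rw [mul_assoc (10000 * Z ^ 3)]
      refine mul_le_mul_of_nonneg_left ?_ (by positivity)
      have f1 : (N : ℝ) ^ 3 ≤ N ^ 4 * E := by
        calc (N : ℝ) ^ 3 ≤ N ^ 3 * (N * E) := le_mul_of_one_le_right (by positivity) hNE
          _ = _ := by ring
      have f2 : (N : ℝ) * ρ.den ≤ N ^ 4 * E := by
        calc (N : ℝ) * ρ.den ≤ N * (N ^ 3 * E) := by gcongr
          _ = _ := by ring
      calc _ ≤ N ^ 4 * E + (N : ℝ) ^ 4 / ρ.den + N ^ 4 * E := by gcongr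
        _ = _ := by ring

lemma rat_sep (x y : ℚ) (s t : ℕ) (hs : 1 ≤ s) (ht : 1 ≤ t) (hx : x.den ∣ s) (hy : y.den ∣ t) (hxy : x ≠ y) :
    (1 : ℝ) ≤ |(x : ℝ) - y| * s * t := by
  have key : (1 : ℚ) ≤ |x - y| * s * t := by
    have h1 : ∃ k : ℤ, x * s = k := by
      obtain ⟨w, rfl⟩ := hx
      refine ⟨x.num * w, ?_⟩
      push_cast
      rw [← mul_assoc, Rat.mul_den_eq_num]
    have h2 : ∃ k : ℤ, y * t = k := by
      obtain ⟨w, rfl⟩ := hy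
      refine ⟨y.num * w, ?_⟩
      push_cast
      rw [← mul_assoc, Rat.mul_den_eq_num]
    obtain ⟨k, hk⟩ := h1
    obtain ⟨l, hl⟩ := h2
    have hs0 : (0 : ℚ) < s := by exact_mod_cast hs
    have ht0 : (0 : ℚ) < t := by exact_mod_cast ht
    have e : |x - y| * s * t = |((k * t - l * s : ℤ) : ℚ)| := by
      push_cast
      rw [← hk, ← hl]
      rw [show x * s * t - y * t * s = (x - y) * s * t by ring, abs_mul, abs_mul, abs_of_pos hs0,
        abs_of_pos ht0]
    have hne : (k * t - l * s : ℤ) ≠ 0 := by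
      intro h0
      rw [h0] at e
      simp only [Int.cast_zero, abs_zero, mul_eq_zero, abs_eq_zero] at e
      rcases e with (e | e) | e
      · exact hxy (sub_eq_zero.1 e)
      · exact hs0.ne' e
      · exact ht0.ne' e
    rw [e, ← Int.cast_abs]
    exact_mod_cast Int.one_le_abs hne
  exact_mod_cast key

lemma den_div_dvd (ρ : ℚ) (m : ℕ) (hm : 1 ≤ m) : (ρ / (m : ℚ) ^ 3).den ∣ ρ.den * m ^ 3 := by
  have : ρ / (m : ℚ) ^ 3 = Rat.divInt ρ.num ((ρ.den * m ^ 3 : ℕ) : ℤ) := by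
    rw [Rat.divInt_eq_div]
    push_cast
    rw [← div_div, Rat.num_div_den]
  rw [this]
  have := Rat.den_dvd ρ.num ((ρ.den * m ^ 3 : ℕ) : ℤ)
  exact_mod_cast this

lemma gcd_sum (B U : ℕ) (hB : 1 ≤ B) (hU : 1 ≤ U) :
    ∑ m ∈ Finset.Icc 1 U, (Nat.gcd B m : ℝ) / m ≤ B.divisors.card * (1 + Real.log U) := by
  have hH : ∑ k ∈ Finset.Icc 1 U, (1 : ℝ) / k ≤ 1 + Real.log U := by
    refine le_trans (le_of_eq ?_) (sum_inv_le U hU)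
    have h := Finset.sum_Ico_add' (fun k : ℕ => (1 : ℝ) / k) 0 U 1
    rw [Finset.range_eq_Ico]
    push_cast at h
    rw [h]
    refine Finset.sum_congr ?_ fun _ _ => rfl
    ext x; simp only [Finset.mem_Icc, Finset.mem_Ico]; omega
  calc ∑ m ∈ Finset.Icc 1 U, (Nat.gcd B m : ℝ) / m ≤
      ∑ m ∈ Finset.Icc 1 U, ∑ g ∈ B.divisors, (if g ∣ m then (g : ℝ) / m else 0) := by
        refine Finset.sum_le_sum fun m _ => ?_
        have h := Finset.single_le_sum (s := B.divisors)
          (f := fun g : ℕ => if g ∣ m then (g : ℝ) / m else 0)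
          (fun g _ => by split_ifs <;> positivity)
          (Nat.mem_divisors.2 ⟨Nat.gcd_dvd_left B m, by omega⟩)
        simpa [Nat.gcd_dvd_right] using h
    _ = ∑ g ∈ B.divisors, ∑ m ∈ Finset.Icc 1 U, (if g ∣ m then (g : ℝ) / m else 0) :=
        Finset.sum_comm
    _ ≤ ∑ g ∈ B.divisors, (1 + Real.log U) := by
        refine Finset.sum_le_sum fun g hg => le_trans ?_ hH
        have hg0 : 0 < g := Nat.pos_of_mem_divisors hg
        have hg0' : (0 : ℝ) < g := by exact_mod_cast hg0
        rw [← Finset.sum_filter]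
        calc ∑ m ∈ (Finset.Icc 1 U).filter (fun m => g ∣ m), (g : ℝ) / m ≤
            ∑ m ∈ (Finset.Icc 1 U).image (fun k => g * k), (g : ℝ) / m := by
              refine Finset.sum_le_sum_of_subset_of_nonneg ?_ fun _ _ _ => by positivity
              intro m hm
              obtain ⟨hm1, k, rfl⟩ := Finset.mem_filter.1 hm
              rw [Finset.mem_Icc] at hm1
              refine Finset.mem_image.2 ⟨k, Finset.mem_Icc.2 ⟨?_, ?_⟩, rfl⟩
              · exact Nat.pos_of_mul_pos_left hm1.1
              · exact (Nat.le_mul_of_pos_left k hg0).trans hm1.2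
          _ = ∑ k ∈ Finset.Icc 1 U, (g : ℝ) / ((g * k : ℕ) : ℝ) := by
              rw [Finset.sum_image]
              intro x _ y _ hxy
              exact Nat.eq_of_mul_eq_mul_left hg0 hxy
          _ = ∑ k ∈ Finset.Icc 1 U, (1 : ℝ) / k := by
              refine Finset.sum_congr rfl fun k _ => ?_
              push_cast
              rw [← div_div, div_self hg0'.ne']
    _ = _ := by rw [Finset.sum_const, nsmul_eq_mul]

lemma typeI_good (T Z N δ g r : ℝ) (hT : 0 ≤ T) (hZ : 1 ≤ Z) (hN : 0 ≤ N) (hδ : 0 < δ) (hg : 1 ≤ g)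
    (hr : 1 / r ≤ 3 * g * δ ^ 4)
    (h : T ^ 4 ≤ 10000 * Z ^ 3 * N ^ 4 * (2 * δ ^ 4 + 1 / r)) : T ≤ 15 * Z * N * g * δ := by
  have : T ^ 4 ≤ (15 * Z * N * g * δ) ^ 4 := by
    have hZ3 : Z ^ 3 ≤ Z ^ 4 := pow_le_pow_right₀ hZ (by norm_num)
    have hg4 : g ≤ g ^ 4 := le_self_pow₀ hg (by norm_num)
    calc T ^ 4 ≤ _ := h
      _ ≤ 10000 * Z ^ 3 * N ^ 4 * (2 * (g * δ ^ 4) + 3 * g * δ ^ 4) := by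
          gcongr
          exact le_mul_of_one_le_left (by positivity) hg
      _ = 50000 * (Z ^ 3 * N ^ 4 * g * δ ^ 4) := by ring
      _ ≤ 50625 * (Z ^ 4 * N ^ 4 * g ^ 4 * δ ^ 4) := by gcongr; norm_num
      _ = _ := by ring
  exact le_of_pow_le_pow_left₀ (by norm_num) (by positivity) this

lemma bad_unique {X : ℕ} {α : ℝ} {a : ℤ} {q : ℕ} {Z δ : ℝ} (c : Ctx X α a q Z δ) (U : ℕ)
    (hU : U ^ 4 ≤ X) (m m' : ℕ) (hm : 1 ≤ m) (hm' : 1 ≤ m') (hmU : m ≤ U) (hmU' : m' ≤ U)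
    (hne : m ≠ m') (ρ ρ' : ℚ)
    (h1 : |α - ((ρ / (m : ℚ) ^ 3 : ℚ) : ℝ)| ≤ 8 / ((X : ℝ) ^ 3 * δ ^ 4 * ρ.den))
    (h2 : |α - ((ρ' / (m' : ℚ) ^ 3 : ℚ) : ℝ)| ≤ 8 / ((X : ℝ) ^ 3 * δ ^ 4 * ρ'.den))
    (b1 : (ρ.den : ℝ) * δ ^ 4 < 1) (b2 : (ρ'.den : ℝ) * δ ^ 4 < 1) :
    ρ / (m : ℚ) ^ 3 = ρ' / (m' : ℚ) ^ 3 := by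
  by_contra hcon
  have hX := c.X1
  have h0 := c.hδ0
  have hr : 1 ≤ ρ.den := ρ.pos
  have hr' : 1 ≤ ρ'.den := ρ'.pos
  have hs := rat_sep _ _ (ρ.den * m ^ 3) (ρ'.den * m' ^ 3)
    (Nat.mul_pos hr (by positivity)) (Nat.mul_pos hr' (by positivity))
    (den_div_dvd ρ m hm) (den_div_dvd ρ' m' hm') hcon
  set x : ℝ := ((ρ / (m : ℚ) ^ 3 : ℚ) : ℝ)
  set y : ℝ := ((ρ' / (m' : ℚ) ^ 3 : ℚ) : ℝ)
  have hxy : |x - y| ≤ 8 / ((X : ℝ) ^ 3 * δ ^ 4 * ρ.den) + 8 / ((X : ℝ) ^ 3 * δ ^ 4 * ρ'.den) := by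
    have : x - y = -(α - x) + (α - y) := by ring
    rw [this]
    refine (abs_add_le _ _).trans ?_
    rw [abs_neg]
    exact add_le_add h1 h2
  push_cast at hs
  have hR : (1 : ℝ) ≤ ρ.den := by exact_mod_cast hr
  have hR' : (1 : ℝ) ≤ ρ'.den := by exact_mod_cast hr'
  set R : ℝ := (ρ.den : ℝ)
  set R' : ℝ := (ρ'.den : ℝ)
  set E := δ ^ 4 with hE
  have hE0 : 0 < E := by positivity
  have hXE : 1 ≤ X * E ^ 8 := by rw [hE, ← pow_mul]; exact c.h1
  have hUm : (m : ℝ) ≤ U := by exact_mod_cast hmU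
  have hUm' : (m' : ℝ) ≤ U := by exact_mod_cast hmU'
  have hU1 : (2 : ℝ) ≤ U := by
    have : 2 ≤ U := by omega
    exact_mod_cast this
  have hU4 : (U : ℝ) ^ 4 ≤ X := by exact_mod_cast hU
  have hX16 : (16 : ℝ) ≤ X := by
    refine le_trans ?_ hU4
    calc (16 : ℝ) = 2 ^ 4 := by norm_num
      _ ≤ _ := by gcongr
  have k1 : (X : ℝ) ^ 3 * E ≤ 8 * (R + R') * (U : ℝ) ^ 6 := by
    have : (1 : ℝ) ≤ (8 / ((X : ℝ) ^ 3 * E * R) + 8 / ((X : ℝ) ^ 3 * E * R')) *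
        (R * (U : ℝ) ^ 3) * (R' * (U : ℝ) ^ 3) := by
      refine hs.trans ?_
      gcongr
    have e : (8 / ((X : ℝ) ^ 3 * E * R) + 8 / ((X : ℝ) ^ 3 * E * R')) *
        (R * (U : ℝ) ^ 3) * (R' * (U : ℝ) ^ 3) = (8 * (R + R') * (U : ℝ) ^ 6) / ((X : ℝ) ^ 3 * E) := by
      field_simp
      ring
    rw [e, le_div_iff₀ (by positivity)] at this
    linarith
  have k2 : (X : ℝ) ^ 3 * E ^ 2 ≤ 16 * (U : ℝ) ^ 6 := by
    calc (X : ℝ) ^ 3 * E ^ 2 = ((X : ℝ) ^ 3 * E) * E := by ring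
      _ ≤ (8 * (R + R') * (U : ℝ) ^ 6) * E := by gcongr
      _ = 8 * (U : ℝ) ^ 6 * (R * E + R' * E) := by ring
      _ ≤ 8 * (U : ℝ) ^ 6 * (1 + 1) := by gcongr
      _ = _ := by ring
  have k3 : (X : ℝ) ^ 11 ≤ 65536 * (X : ℝ) ^ 6 := by
    calc (X : ℝ) ^ 11 ≤ (X : ℝ) ^ 11 * (X * E ^ 8) := le_mul_of_one_le_right (by positivity) hXE
      _ = ((X : ℝ) ^ 3 * E ^ 2) ^ 4 := by ring
      _ ≤ (16 * (U : ℝ) ^ 6) ^ 4 := by gcongr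
      _ = 65536 * ((U : ℝ) ^ 4) ^ 6 := by ring
      _ ≤ _ := by gcongr
  have k4 : (16 : ℝ) ^ 5 ≤ (X : ℝ) ^ 5 := by gcongr
  have k5 : 0 < (X : ℝ) ^ 6 := by positivity
  have : (X : ℝ) ^ 11 = X ^ 5 * X ^ 6 := by ring
  rw [this] at k3
  have := le_of_mul_le_mul_right k3 k5
  norm_num at k4
  linarith

lemma bad_den {X : ℕ} {α : ℝ} {a : ℤ} {q : ℕ} {Z δ : ℝ} (c : Ctx X α a q Z δ) (ρ : ℚ) (r : ℝ)
    (hr : 1 ≤ r) (h1 : |α - (ρ : ℝ)| ≤ 8 / ((X : ℝ) ^ 3 * δ ^ 4 * r)) :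
    1 ≤ 9 * (ρ.den : ℝ) * (δ ^ 4) ^ 3 := by
  have hX := c.X1
  have h0 := c.hδ0
  set E := δ ^ 4 with hE
  have hE0 : 0 < E := by positivity
  have hE1 : E ≤ 1 := pow_le_one₀ h0.le c.hδ1
  have e2 : δ ^ 16 = E ^ 4 := by rw [hE, ← pow_mul]
  have c2 := c.h2
  have c3 := c.h3
  rw [e2] at c2 c3
  have hq0 : (0 : ℝ) < q := by exact_mod_cast c.hq
  have hB1 : (1 : ℝ) ≤ ρ.den := by exact_mod_cast ρ.pos
  have hE43 : E ^ 4 ≤ E ^ 3 := pow_le_pow_of_le_one hE0.le hE1 (by norm_num)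
  set σ : ℚ := (a : ℚ) / (q : ℚ) with hσ
  have hσden : σ.den = q := by
    have h := Rat.den_div_eq_of_coprime (a := a) (b := q) (by exact_mod_cast c.hq) (by
      have := c.hg
      simpa [Int.gcd] using this)
    rw [hσ]
    exact_mod_cast h
  by_cases hcase : ρ = σ
  · rw [hcase, hσden]
    nlinarith
  · have hs := rat_sep σ ρ q ρ.den c.hq ρ.pos (by rw [hσden]) dvd_rfl (Ne.symm hcase)
    have hsr : ((σ : ℚ) : ℝ) = (a : ℝ) / q := by rw [hσ]; push_cast; rfl
    have hxy : |(σ : ℝ) - ρ| ≤ 1 / (q : ℝ) ^ 2 + 8 / ((X : ℝ) ^ 3 * E) := by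
      have : (σ : ℝ) - ρ = -(α - σ) + (α - ρ) := by ring
      rw [this]
      refine (abs_add_le _ _).trans ?_
      rw [abs_neg, hsr]
      refine add_le_add c.hα (h1.trans ?_)
      refine div_le_div_of_nonneg_left (by norm_num) (by positivity) ?_
      exact le_mul_of_one_le_right (by positivity) hr
    have k1 : (1 : ℝ) ≤ (1 / (q : ℝ) ^ 2 + 8 / ((X : ℝ) ^ 3 * E)) * q * ρ.den := by
      refine hs.trans ?_
      gcongr
    have k2 : 1 / (q : ℝ) ^ 2 * q ≤ E ^ 3 := by
      have : 1 / (q : ℝ) ^ 2 * q = 1 / q := by field_simp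
      rw [this, div_le_iff₀ hq0]
      nlinarith
    have k3 : 8 / ((X : ℝ) ^ 3 * E) * q ≤ 8 * E ^ 3 := by
      rw [div_mul_eq_mul_div, div_le_iff₀ (by positivity)]
      calc 8 * (q : ℝ) ≤ 8 * (X ^ 3 * E ^ 4) := by gcongr
        _ = _ := by ring
    calc (1 : ℝ) ≤ _ := k1
      _ = (1 / (q : ℝ) ^ 2 * q + 8 / ((X : ℝ) ^ 3 * E) * q) * ρ.den := by ring
      _ ≤ (E ^ 3 + 8 * E ^ 3) * ρ.den := by gcongr
      _ = _ := by ring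

lemma bad_r (B r m : ℕ) (hB : 1 ≤ B) (hr : 1 ≤ r) (hm : 1 ≤ m) (hdvd : B ∣ r * m ^ 3) (E : ℝ) (hE : 0 < E)
    (hBE : 1 ≤ 9 * (B : ℝ) * E ^ 3) : 1 / (r : ℝ) ≤ 3 * (Nat.gcd B m : ℝ) * E := by
  set h := Nat.gcd B (m ^ 3) with hh
  set g := Nat.gcd B m with hg
  have hB0 : (0 : ℝ) < B := by exact_mod_cast hB
  have hr0 : (0 : ℝ) < r := by exact_mod_cast hr
  have d1 : B ∣ r * h := by
    have : B ∣ Nat.gcd (r * B) (r * m ^ 3) := Nat.dvd_gcd (dvd_mul_left B r) hdvd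
    rwa [Nat.gcd_mul_left] at this
  have hh0 : 0 < h := Nat.gcd_pos_of_pos_left _ hB
  have l1 : B ≤ r * h := Nat.le_of_dvd (Nat.mul_pos hr hh0) d1
  have l2 : h ≤ B := Nat.gcd_le_left _ hB
  have hg0 : 0 < g := Nat.gcd_pos_of_pos_left _ hB
  have l3 : h ≤ g ^ 3 := by
    have : h ∣ g ^ 3 := gcd_pow_right_dvd_pow_gcd (α := ℕ)
    exact Nat.le_of_dvd (by positivity) this
  have l1' : (B : ℝ) ≤ r * h := by exact_mod_cast l1
  have l2' : (h : ℝ) ≤ B := by exact_mod_cast l2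
  have l3' : (h : ℝ) ≤ (g : ℝ) ^ 3 := by exact_mod_cast l3
  have s1 : 1 / (r : ℝ) ≤ h / B := by
    rw [div_le_div_iff₀ hr0 hB0]; linarith
  refine s1.trans ?_
  have hq1 : (h : ℝ) / B ≤ 1 := (div_le_one hB0).2 l2'
  have : ((h : ℝ) / B) ^ 3 ≤ (3 * (g : ℝ) * E) ^ 3 := by
    calc ((h : ℝ) / B) ^ 3 ≤ (h : ℝ) / B := pow_le_of_le_one (by positivity) hq1 (by norm_num)
      _ ≤ (g : ℝ) ^ 3 / B := by gcongr
      _ ≤ (g : ℝ) ^ 3 * (9 * E ^ 3) := by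
          rw [div_le_iff₀ hB0, mul_assoc]
          refine le_mul_of_one_le_right (by positivity) ?_
          linarith
      _ ≤ (g : ℝ) ^ 3 * (27 * E ^ 3) := by gcongr; norm_num
      _ = _ := by ring
  exact le_of_pow_le_pow_left₀ (by norm_num) (by positivity) this

lemma typeI_core {X : ℕ} {α : ℝ} {a : ℤ} {q : ℕ} {Z δ : ℝ} (c : Ctx X α a q Z δ) (U : ℕ)
    (hU : U ^ 4 ≤ X) :
    ∃ B : ℕ, 1 ≤ B ∧ (B.divisors.card : ℝ) ≤ Z ∧ ∀ m, 1 ≤ m → m ≤ U → ∀ Y ≤ X / m,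
      ‖∑ n ∈ Finset.Icc 1 Y, eexp (α * ((m * n : ℕ) : ℝ) ^ 3)‖ ≤
        15 * Z * ((X / m : ℕ) : ℝ) * (Nat.gcd B m : ℝ) * δ := by
  have hX := c.X1
  have h0 := c.hδ0
  have hE0 : 0 < δ ^ 4 := by positivity
  have hm4 : ∀ m, m ≤ U → m ^ 4 ≤ X := fun m hm => (Nat.pow_le_pow_left hm 4).trans hU
  have hex : ∀ m : ℕ, ∃ ρ : ℚ, 1 ≤ m → m ≤ U → (ρ.den ≤ X ^ 3 ∧
      |α - ((ρ / (m : ℚ) ^ 3 : ℚ) : ℝ)| ≤ 8 / ((X : ℝ) ^ 3 * δ ^ 4 * ρ.den) ∧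
      ∀ Y ≤ X / m, ‖∑ n ∈ Finset.Icc 1 Y, eexp (α * ((m * n : ℕ) : ℝ) ^ 3)‖ ^ 4 ≤
        10000 * Z ^ 3 * ((X / m : ℕ) : ℝ) ^ 4 * (2 * δ ^ 4 + 1 / (ρ.den : ℝ))) := by
    intro m
    by_cases h : 1 ≤ m ∧ m ≤ U
    · obtain ⟨ρ, hρ⟩ := typeI_dir c m h.1 (hm4 m h.2)
      exact ⟨ρ, fun _ _ => hρ⟩
    · exact ⟨0, fun h1 h2 => absurd ⟨h1, h2⟩ h⟩
  choose ρ hρ using hex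
  have good : ∀ m B : ℕ, 1 ≤ B → 1 ≤ m → m ≤ U → 1 / ((ρ m).den : ℝ) ≤ 3 * (Nat.gcd B m : ℝ) * δ ^ 4 →
      ∀ Y ≤ X / m, ‖∑ n ∈ Finset.Icc 1 Y, eexp (α * ((m * n : ℕ) : ℝ) ^ 3)‖ ≤
        15 * Z * ((X / m : ℕ) : ℝ) * (Nat.gcd B m : ℝ) * δ := by
    intro m B hB hm hmU hr Y hY
    have : 1 ≤ Nat.gcd B m := Nat.gcd_pos_of_pos_left _ hB
    exact typeI_good _ Z _ δ _ _ (norm_nonneg _) c.hZ1 (by positivity) h0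
      (by exact_mod_cast this) hr ((hρ m hm hmU).2.2 Y hY)
  have notbad : ∀ m B : ℕ, 1 ≤ B → ¬ ((ρ m).den : ℝ) * δ ^ 4 < 1 →
      1 / ((ρ m).den : ℝ) ≤ 3 * (Nat.gcd B m : ℝ) * δ ^ 4 := by
    intro m B hB h
    rw [not_lt] at h
    have hr : (0 : ℝ) < (ρ m).den := by exact_mod_cast (ρ m).pos
    have : 1 ≤ Nat.gcd B m := Nat.gcd_pos_of_pos_left _ hB
    have hg : (1 : ℝ) ≤ Nat.gcd B m := by exact_mod_cast this
    rw [div_le_iff₀ hr]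
    nlinarith
  by_cases hbad : ∃ m, 1 ≤ m ∧ m ≤ U ∧ ((ρ m).den : ℝ) * δ ^ 4 < 1
  · obtain ⟨m₀, hm₀, hmU₀, hb₀⟩ := hbad
    set σ := ρ m₀ / (m₀ : ℚ) ^ 3 with hσ
    have hR0 : 1 ≤ (ρ m₀).den := (ρ m₀).pos
    have hden := bad_den c σ (ρ m₀).den (by exact_mod_cast hR0) (hρ m₀ hm₀ hmU₀).2.1
    refine ⟨σ.den, σ.pos, ?_, ?_⟩
    · refine c.hZ _ σ.pos.ne' ?_
      have h1 := Nat.le_of_dvd (Nat.mul_pos hR0 (by positivity)) (den_div_dvd (ρ m₀) m₀ hm₀)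
      have h2 := (hρ m₀ hm₀ hmU₀).1
      have h3 : m₀ ≤ X := (Nat.le_self_pow (by norm_num) m₀).trans (hm4 m₀ hmU₀)
      calc σ.den ≤ _ := h1
        _ ≤ X ^ 3 * X ^ 3 := by gcongr
        _ = 1 * X ^ 6 := by ring
        _ ≤ 100 * X ^ 10 := by
          gcongr
          · norm_num
          · exact c.hX
          · norm_num
    · intro m hm hmU
      refine good m _ σ.pos hm hmU ?_
      by_cases hb : ((ρ m).den : ℝ) * δ ^ 4 < 1
      · have hsame : ρ m / (m : ℚ) ^ 3 = σ := by
          by_cases hmm : m = m₀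
          · rw [hmm]
          · exact bad_unique c U hU m m₀ hm hm₀ hmU hmU₀ hmm _ _ (hρ m hm hmU).2.1
              (hρ m₀ hm₀ hmU₀).2.1 hb hb₀
        refine bad_r _ _ m σ.pos (ρ m).pos hm ?_ _ hE0 hden
        rw [← hsame]
        exact den_div_dvd _ _ hm
      · exact notbad m _ σ.pos hb
  · push Not at hbad
    refine ⟨1, le_rfl, by simpa using c.hZ1, ?_⟩
    intro m hm hmU
    exact good m 1 le_rfl hm hmU (notbad m 1 le_rfl (not_lt.2 (hbad m hm hmU)))

/-- type I estimate -/
lemma typeI {X : ℕ} {α : ℝ} {a : ℤ} {q : ℕ} {Z δ : ℝ} (c : Ctx X α a q Z δ) (U : ℕ) (hU1 : 1 ≤ U)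
    (hU : U ^ 4 ≤ X) :
    ∃ T : ℕ → ℝ, (∀ m, 0 ≤ T m) ∧ (∀ m, 1 ≤ m → m ≤ U → ∀ Y ≤ X / m,
      ‖∑ n ∈ Finset.Icc 1 Y, eexp (α * ((m * n : ℕ) : ℝ) ^ 3)‖ ≤ T m) ∧
      ∑ m ∈ Finset.Icc 1 U, T m ≤ 15 * Z ^ 3 * X * δ := by
  obtain ⟨B, hB, hBZ, h⟩ := typeI_core c U hU
  have hX := c.X1
  have h0 := c.hδ0
  have hZ1 := c.hZ1
  refine ⟨fun m => 15 * Z * ((X / m : ℕ) : ℝ) * (Nat.gcd B m : ℝ) * δ, fun m => by positivity, h, ?_⟩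
  calc ∑ m ∈ Finset.Icc 1 U, 15 * Z * ((X / m : ℕ) : ℝ) * (Nat.gcd B m : ℝ) * δ ≤
      ∑ m ∈ Finset.Icc 1 U, (15 * Z * X * δ) * ((Nat.gcd B m : ℝ) / m) := by
        refine Finset.sum_le_sum fun m hm => ?_
        have : ((X / m : ℕ) : ℝ) ≤ X / m := Nat.cast_div_le
        calc 15 * Z * ((X / m : ℕ) : ℝ) * (Nat.gcd B m : ℝ) * δ ≤
            15 * Z * (X / m) * (Nat.gcd B m : ℝ) * δ := by gcongr
          _ = _ := by ring
    _ = (15 * Z * X * δ) * ∑ m ∈ Finset.Icc 1 U, ((Nat.gcd B m : ℝ) / m) := by rw [Finset.mul_sum]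
    _ ≤ (15 * Z * X * δ) * (B.divisors.card * (1 + Real.log U)) := by
        gcongr
        exact gcd_sum B U hB hU1
    _ ≤ (15 * Z * X * δ) * (Z * Z) := by
        have hUX : (U : ℝ) ≤ X := by
          exact_mod_cast (Nat.le_self_pow (by norm_num) U).trans hU
        have hU0 : (0 : ℝ) < U := by exact_mod_cast hU1
        have hl := Real.log_le_log hU0 hUX
        have hl0 : 0 ≤ Real.log U := Real.log_natCast_nonneg U
        have := c.hlog
        gcongr
        linarith
    _ = _ := by ring

end MinorArc


namespace MinorArc

open ArithmeticFunction

/-- low part of an arithmetic function -/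
noncomputable def lo (U : ℕ) (f : ArithmeticFunction ℝ) : ArithmeticFunction ℝ :=
  ⟨fun n => if n ≤ U then f n else 0, by simp⟩

/-- high part of an arithmetic function -/
noncomputable def hi (U : ℕ) (f : ArithmeticFunction ℝ) : ArithmeticFunction ℝ :=
  ⟨fun n => if n ≤ U then 0 else f n, by simp⟩

lemma lo_apply (U : ℕ) (f : ArithmeticFunction ℝ) (n : ℕ) : lo U f n = if n ≤ U then f n else 0 := rfl
lemma hi_apply (U : ℕ) (f : ArithmeticFunction ℝ) (n : ℕ) : hi U f n = if n ≤ U then 0 else f n := rfl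

lemma lo_add_hi (U : ℕ) (f : ArithmeticFunction ℝ) : lo U f + hi U f = f := by
  ext n
  rw [ArithmeticFunction.add_apply, lo_apply, hi_apply]
  split_ifs <;> simp

/-- the exponential sum weighted by an arithmetic function -/
noncomputable def ES (X : ℕ) (α : ℝ) (f : ArithmeticFunction ℝ) : ℂ :=
  ∑ n ∈ Finset.Icc 1 X, (f n : ℂ) * eexp (α * (n : ℝ) ^ 3)

lemma ES_add (X : ℕ) (α : ℝ) (f g : ArithmeticFunction ℝ) : ES X α (f + g) = ES X α f + ES X α g := by
  unfold ES
  rw [← Finset.sum_add_distrib]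
  refine Finset.sum_congr rfl fun n _ => ?_
  rw [ArithmeticFunction.add_apply]; push_cast; ring

lemma ES_sub (X : ℕ) (α : ℝ) (f g : ArithmeticFunction ℝ) : ES X α (f - g) = ES X α f - ES X α g := by
  have := ES_add X α (f - g) g
  rw [sub_add_cancel] at this
  rw [this]; ring

lemma ES_mul (X : ℕ) (α : ℝ) (f g : ArithmeticFunction ℝ) : ES X α (f * g) =
    ∑ m ∈ Finset.Icc 1 X, ∑ n ∈ Finset.Icc 1 X,
      if m * n ≤ X then (f m : ℂ) * (g n : ℂ) * eexp (α * ((m * n : ℕ) : ℝ) ^ 3) else 0 := by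
  unfold ES
  have h1 : ∀ k ∈ Finset.Icc 1 X, (((f * g) k : ℝ) : ℂ) * eexp (α * (k : ℝ) ^ 3) =
      ∑ x ∈ (Finset.Icc 1 X ×ˢ Finset.Icc 1 X).filter (fun x => x.1 * x.2 = k),
        (f x.1 : ℂ) * (g x.2 : ℂ) * eexp (α * ((x.1 * x.2 : ℕ) : ℝ) ^ 3) := by
    intro k hk
    rw [Finset.mem_Icc] at hk
    rw [mul_apply]
    push_cast
    rw [Finset.sum_mul]
    have hset : k.divisorsAntidiagonal =
        (Finset.Icc 1 X ×ˢ Finset.Icc 1 X).filter (fun x => x.1 * x.2 = k) := by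
      ext ⟨m, n⟩
      simp only [Nat.mem_divisorsAntidiagonal, Finset.mem_filter, Finset.mem_product, Finset.mem_Icc]
      constructor
      · rintro ⟨h1, h2⟩
        have hm : 0 < m := Nat.pos_of_ne_zero (by rintro rfl; simp at h1; omega)
        have hn : 0 < n := Nat.pos_of_ne_zero (by rintro rfl; simp at h1; omega)
        have := Nat.le_mul_of_pos_right m hn
        have := Nat.le_mul_of_pos_left n hm
        refine ⟨⟨⟨hm, by omega⟩, hn, by omega⟩, h1⟩
      · rintro ⟨_, h1⟩
        exact ⟨h1, by omega⟩
    rw [hset]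
    refine Finset.sum_congr rfl fun x hx => ?_
    have hx2 := (Finset.mem_filter.1 hx).2
    rw [← hx2]
    push_cast
    rfl
  rw [Finset.sum_congr rfl h1]
  rw [← Finset.sum_product' (Finset.Icc 1 X) (Finset.Icc 1 X) (fun m n =>
    if m * n ≤ X then (f m : ℂ) * (g n : ℂ) * eexp (α * ((m * n : ℕ) : ℝ) ^ 3) else 0)]
  rw [← Finset.sum_filter]
  have h2 := Finset.sum_fiberwise_of_maps_to
    (s := (Finset.Icc 1 X ×ˢ Finset.Icc 1 X).filter (fun x => x.1 * x.2 ≤ X)) (t := Finset.Icc 1 X)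
    (g := fun x => x.1 * x.2) (by
      intro x hx
      simp only [Finset.mem_filter, Finset.mem_product, Finset.mem_Icc] at hx ⊢
      exact ⟨Nat.mul_pos hx.1.1.1 hx.1.2.1, hx.2⟩)
    (fun x => (f x.1 : ℂ) * (g x.2 : ℂ) * eexp (α * ((x.1 * x.2 : ℕ) : ℝ) ^ 3))
  rw [← h2]
  refine Finset.sum_congr rfl fun k hk => Finset.sum_congr ?_ fun _ _ => rfl
  rw [Finset.mem_Icc] at hk
  ext x
  simp only [Finset.mem_filter]
  constructor
  · rintro ⟨h3, h4⟩; exact ⟨⟨h3, by omega⟩, h4⟩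
  · rintro ⟨⟨h3, _⟩, h4⟩; exact ⟨h3, h4⟩

lemma ES_mul' (X : ℕ) (α : ℝ) (f g : ArithmeticFunction ℝ) : ES X α (f * g) =
    ∑ m ∈ Finset.Icc 1 X, (f m : ℂ) * ∑ n ∈ Finset.Icc 1 (X / m),
      (g n : ℂ) * eexp (α * ((m * n : ℕ) : ℝ) ^ 3) := by
  rw [ES_mul]
  refine Finset.sum_congr rfl fun m hm => ?_
  rw [Finset.mem_Icc] at hm
  rw [Finset.mul_sum, ← Finset.sum_filter]
  refine Finset.sum_congr ?_ fun n _ => by ring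
  ext n
  simp only [Finset.mem_filter, Finset.mem_Icc]
  rw [Nat.le_div_iff_mul_le (by omega), mul_comm n m]
  constructor
  · tauto
  · rintro ⟨h1, h2⟩
    have := Nat.le_mul_of_pos_left n (show 0 < m by omega)
    refine ⟨⟨h1, by omega⟩, h2⟩

lemma abel (f : ℕ → ℝ) (c : ℕ → ℂ) (T : ℝ) (Y : ℕ) (hT : ∀ y ≤ Y, ‖∑ n ∈ Finset.Icc 1 y, c n‖ ≤ T) :
    ‖∑ n ∈ Finset.Icc 1 Y, (f n : ℂ) * c n‖ ≤ (|f Y| + ∑ k ∈ Finset.range Y, |f (k + 1) - f k|) * T := by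
  have key : ∀ y, y ≤ Y → ‖(f y : ℂ) * ∑ n ∈ Finset.Icc 1 y, c n - ∑ n ∈ Finset.Icc 1 y, (f n : ℂ) * c n‖ ≤
      (∑ k ∈ Finset.range y, |f (k + 1) - f k|) * T := by
    intro y
    induction y with
    | zero => intro _; simp
    | succ y ih =>
      intro hy
      have h1 := ih (by omega)
      have h2 := hT y (by omega)
      rw [Finset.sum_Icc_succ_top (by omega), Finset.sum_Icc_succ_top (by omega), Finset.sum_range_succ]
      have e : (f (y + 1) : ℂ) * (∑ n ∈ Finset.Icc 1 y, c n + c (y + 1)) -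
          (∑ n ∈ Finset.Icc 1 y, (f n : ℂ) * c n + (f (y + 1) : ℂ) * c (y + 1)) =
          ((f y : ℂ) * ∑ n ∈ Finset.Icc 1 y, c n - ∑ n ∈ Finset.Icc 1 y, (f n : ℂ) * c n) +
          ((f (y + 1) - f y : ℝ) : ℂ) * ∑ n ∈ Finset.Icc 1 y, c n := by
        push_cast; ring
      rw [e, add_mul]
      refine (norm_add_le _ _).trans (add_le_add h1 ?_)
      rw [norm_mul, Complex.norm_real, Real.norm_eq_abs]
      gcongr
  have h1 := key Y le_rfl
  have h2 := hT Y le_rfl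
  have h3 : ‖(f Y : ℂ) * ∑ n ∈ Finset.Icc 1 Y, c n‖ ≤ |f Y| * T := by
    rw [norm_mul, Complex.norm_real, Real.norm_eq_abs]
    gcongr
  have e : ∑ n ∈ Finset.Icc 1 Y, (f n : ℂ) * c n = (f Y : ℂ) * ∑ n ∈ Finset.Icc 1 Y, c n -
      ((f Y : ℂ) * ∑ n ∈ Finset.Icc 1 Y, c n - ∑ n ∈ Finset.Icc 1 Y, (f n : ℂ) * c n) := by ring
  rw [e, add_mul]
  exact (norm_sub_le _ _).trans (add_le_add h3 h1)

lemma vaughan (U : ℕ) : vonMangoldt = lo U vonMangoldt + lo U (moebius : ArithmeticFunction ℝ) * log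
    - lo U (moebius : ArithmeticFunction ℝ) * lo U vonMangoldt * (zeta : ArithmeticFunction ℝ)
    + hi U (moebius : ArithmeticFunction ℝ) * (hi U vonMangoldt * (zeta : ArithmeticFunction ℝ)) := by
  have h1 : hi U (moebius : ArithmeticFunction ℝ) = (moebius : ArithmeticFunction ℝ) - lo U (moebius : ArithmeticFunction ℝ) :=
    eq_sub_of_add_eq' (lo_add_hi U _)
  have h2 : hi U vonMangoldt = vonMangoldt - lo U vonMangoldt :=
    eq_sub_of_add_eq' (lo_add_hi U _)
  rw [h1, h2, ← vonMangoldt_mul_zeta]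
  have h3 : (moebius : ArithmeticFunction ℝ) * (zeta : ArithmeticFunction ℝ) = 1 := coe_moebius_mul_coe_zeta
  linear_combination (vonMangoldt - lo U vonMangoldt) * (- h3)

lemma exists_U (X : ℕ) (hX : 1 ≤ X) : ∃ U : ℕ, 1 ≤ U ∧ U ^ 4 ≤ X ∧ X < (U + 1) ^ 4 := by
  refine ⟨Nat.sqrt (Nat.sqrt X), ?_, ?_, ?_⟩
  · have h1 : 1 ≤ Nat.sqrt X := Nat.sqrt_pos.2 hX
    exact Nat.sqrt_pos.2 h1
  · have h1 := Nat.sqrt_le' (Nat.sqrt X)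
    have h2 := Nat.sqrt_le' X
    calc Nat.sqrt (Nat.sqrt X) ^ 4 = (Nat.sqrt (Nat.sqrt X) ^ 2) ^ 2 := by ring
      _ ≤ (Nat.sqrt X) ^ 2 := by gcongr
      _ ≤ X := h2
  · have h1 := Nat.lt_succ_sqrt' (Nat.sqrt X)
    have h2 := Nat.lt_succ_sqrt' X
    calc X < (Nat.sqrt X + 1) ^ 2 := h2
      _ ≤ ((Nat.sqrt (Nat.sqrt X) + 1) ^ 2) ^ 2 := by gcongr; exact h1
      _ = _ := by ring

lemma typeII_af {X : ℕ} {α : ℝ} {a : ℤ} {q : ℕ} {Z δ : ℝ} (c : Ctx X α a q Z δ) (U : ℕ)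
    (hU : X < (U + 1) ^ 4) (f g : ArithmeticFunction ℝ)
    (hf : ∀ m, 1 ≤ m → m ≤ X → |f m| ≤ Z) (hg : ∀ m, 1 ≤ m → m ≤ X → |g m| ≤ Z)
    (hf0 : ∀ m ≤ U, f m = 0) (hg0 : ∀ m ≤ U, g m = 0) :
    ‖ES X α (f * g)‖ ≤ 16 * Z ^ 5 * X * δ := by
  have hX := c.X1
  have h0 := c.hδ0
  have hZ1 := c.hZ1
  have hZ0 : (0 : ℝ) < Z := by linarith
  have nb : ∀ f : ArithmeticFunction ℝ, (∀ m, 1 ≤ m → m ≤ X → |f m| ≤ Z) → ∀ m : ℕ,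
      ‖(if m ≤ X then ((f m / Z : ℝ) : ℂ) else 0)‖ ≤ 1 := by
    intro f hf m
    split_ifs with hm
    · rw [Complex.norm_real, Real.norm_eq_abs, abs_div, abs_of_pos hZ0, div_le_one hZ0]
      rcases Nat.eq_zero_or_pos m with rfl | hp
      · simp [hZ0.le]
      · exact hf m hp hm
    · simp
  have h := typeII c U hU (fun m => if m ≤ X then ((f m / Z : ℝ) : ℂ) else 0)
    (fun m => if m ≤ X then ((g m / Z : ℝ) : ℂ) else 0) (nb f hf) (nb g hg)
    (fun m hm => by simp [hf0 m hm]) (fun m hm => by simp [hg0 m hm])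
  have e : ES X α (f * g) = ((Z ^ 2 : ℝ) : ℂ) * ∑ m ∈ Finset.Icc 1 X, ∑ n ∈ Finset.Icc 1 X,
      if m * n ≤ X then (if m ≤ X then ((f m / Z : ℝ) : ℂ) else 0) *
        (if n ≤ X then ((g n / Z : ℝ) : ℂ) else 0) * eexp (α * ((m * n : ℕ) : ℝ) ^ 3) else 0 := by
    rw [ES_mul, Finset.mul_sum]
    refine Finset.sum_congr rfl fun m hm => ?_
    rw [Finset.mul_sum]
    refine Finset.sum_congr rfl fun n hn => ?_
    rw [Finset.mem_Icc] at hm hn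
    rw [if_pos hm.2, if_pos hn.2]
    have hZc : (Z : ℂ) ≠ 0 := by exact_mod_cast hZ0.ne'
    split_ifs
    · push_cast
      field_simp
    · simp
  rw [e, norm_mul, Complex.norm_real, Real.norm_eq_abs, abs_of_pos (by positivity)]
  calc Z ^ 2 * _ ≤ Z ^ 2 * (16 * Z ^ 3 * X * δ) := by gcongr
    _ = _ := by ring

lemma moebius_abs (n : ℕ) : |((moebius : ArithmeticFunction ℝ) n : ℝ)| ≤ 1 := by
  rw [intCoe_apply]
  have := abs_moebius_le_one (n := n)
  exact_mod_cast this

lemma Ctx.log_le {X : ℕ} {α : ℝ} {a : ℤ} {q : ℕ} {Z δ : ℝ} (c : Ctx X α a q Z δ) (m : ℕ) (hm : 1 ≤ m)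
    (hmX : m ≤ X) : Real.log m ≤ Z := by
  have h := Real.log_le_log (by exact_mod_cast hm) (show (m : ℝ) ≤ X by exact_mod_cast hmX)
  have := c.hlog
  linarith

lemma U_le {X : ℕ} {α : ℝ} {a : ℤ} {q : ℕ} {Z δ : ℝ} (c : Ctx X α a q Z δ) (U : ℕ)
    (hU : U ^ 4 ≤ X) : (U : ℝ) ^ 3 ≤ X * δ := by
  have hX := c.X1
  have h0 := c.hδ0
  have hU' : (U : ℝ) ^ 4 ≤ X := by exact_mod_cast hU
  have : ((U : ℝ) ^ 3) ^ 32 ≤ (X * δ) ^ 32 := by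
    calc ((U : ℝ) ^ 3) ^ 32 = ((U : ℝ) ^ 4) ^ 24 := by ring
      _ ≤ (X : ℝ) ^ 24 := by gcongr
      _ ≤ (X : ℝ) ^ 31 := by gcongr; norm_num
      _ ≤ (X : ℝ) ^ 31 * (X * δ ^ 32) := le_mul_of_one_le_right (by positivity) c.h1
      _ = _ := by ring
  exact le_of_pow_le_pow_left₀ (by norm_num) (by positivity) this

lemma conv_abs_le_log (f : ArithmeticFunction ℝ) (g : ArithmeticFunction ℝ)
    (hf : ∀ n, |f n| ≤ 1) (hg : ∀ n, |g n| ≤ vonMangoldt n) (n : ℕ) :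
    |(f * g) n| ≤ Real.log n := by
  rw [mul_apply, ← vonMangoldt_sum, ← Nat.sum_divisorsAntidiagonal' (f := fun _ j => vonMangoldt j)]
  refine (Finset.abs_sum_le_sum_abs _ _).trans (Finset.sum_le_sum fun x _ => ?_)
  rw [abs_mul]
  have h1 := hf x.1
  have h2 := hg x.2
  have h3 := abs_nonneg (g x.2)
  nlinarith

lemma lambda_bound {X : ℕ} {α : ℝ} {a : ℤ} {q : ℕ} {Z δ : ℝ} (c : Ctx X α a q Z δ) :
    ‖ES X α vonMangoldt‖ ≤ 100 * Z ^ 5 * X * δ := by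
  obtain ⟨U, hU1, hU, hU'⟩ := exists_U X c.hX
  have hX := c.X1
  have h0 := c.hδ0
  have hZ1 := c.hZ1
  have hZ0 : (0 : ℝ) < Z := by linarith
  have hUX : U ≤ X := (Nat.le_self_pow (by norm_num) U).trans hU
  have hU3 := U_le c U hU
  have hUr : (1 : ℝ) ≤ U := by exact_mod_cast hU1
  obtain ⟨T, hT0, hT, hTs⟩ := typeI c U hU1 hU
  set mu1 := lo U (moebius : ArithmeticFunction ℝ) with hmu1
  set L1 := lo U vonMangoldt with hL1
  have hmu1b : ∀ n, |mu1 n| ≤ 1 := by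
    intro n
    rw [hmu1, lo_apply]
    split_ifs
    · exact moebius_abs n
    · simp
  have hL1b : ∀ n, |L1 n| ≤ vonMangoldt n := by
    intro n
    rw [hL1, lo_apply]
    split_ifs
    · rw [abs_of_nonneg vonMangoldt_nonneg]
    · simpa using vonMangoldt_nonneg
  set cc := mu1 * L1 with hcc
  have hccb : ∀ m, 1 ≤ m → m ≤ X → |cc m| ≤ Z := fun m h1 h2 =>
    (conv_abs_le_log mu1 L1 hmu1b hL1b m).trans (c.log_le m h1 h2)
  have t1 : ‖ES X α L1‖ ≤ Z * X * δ := by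
    unfold ES
    have : ∀ n ∈ Finset.Icc 1 X, ‖(L1 n : ℂ) * eexp (α * (n : ℝ) ^ 3)‖ ≤ if n ≤ U then Z else 0 := by
      intro n hn
      rw [Finset.mem_Icc] at hn
      rw [norm_mul, eexp_norm, mul_one, Complex.norm_real, Real.norm_eq_abs]
      by_cases h : n ≤ U
      · rw [if_pos h]
        exact (hL1b n).trans (vonMangoldt_le_log.trans (c.log_le n hn.1 hn.2))
      · rw [if_neg h, hL1, lo_apply, if_neg h]; simp
    refine (norm_sum_le _ _).trans ((Finset.sum_le_sum this).trans ?_)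
    rw [← Finset.sum_filter, Finset.sum_const, nsmul_eq_mul]
    have hc : ((Finset.Icc 1 X).filter (fun n => n ≤ U)).card ≤ U := by
      calc _ ≤ (Finset.Icc 1 U).card := Finset.card_le_card (by
            intro n hn
            simp only [Finset.mem_filter, Finset.mem_Icc] at hn ⊢
            omega)
        _ = U := by simp
    calc _ ≤ (U : ℝ) * Z := by gcongr
      _ ≤ (U : ℝ) ^ 3 * Z := by
          gcongr
          exact le_self_pow₀ hUr (by norm_num)
      _ ≤ X * δ * Z := by gcongr
      _ = _ := by ring
  have tI : ∀ (f g : ArithmeticFunction ℝ) (K L : ℝ), 0 ≤ K → 0 ≤ L → (∀ m, 1 ≤ m → m ≤ U → |f m| ≤ K) →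
      (∀ m, U < m → f m = 0) → (∀ m, 1 ≤ m → m ≤ U →
        ‖∑ n ∈ Finset.Icc 1 (X / m), (g n : ℂ) * eexp (α * ((m * n : ℕ) : ℝ) ^ 3)‖ ≤ L * T m) →
      ‖ES X α (f * g)‖ ≤ K * L * (15 * Z ^ 3 * X * δ) := by
    intro f g K L hK hL hf hf0 hg
    rw [ES_mul']
    have e : ∑ m ∈ Finset.Icc 1 X, (f m : ℂ) * ∑ n ∈ Finset.Icc 1 (X / m),
        (g n : ℂ) * eexp (α * ((m * n : ℕ) : ℝ) ^ 3) = ∑ m ∈ Finset.Icc 1 U, (f m : ℂ) *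
        ∑ n ∈ Finset.Icc 1 (X / m), (g n : ℂ) * eexp (α * ((m * n : ℕ) : ℝ) ^ 3) := by
      symm
      apply Finset.sum_subset (Finset.Icc_subset_Icc_right hUX)
      intro m hm hm'
      rw [Finset.mem_Icc] at hm hm'
      rw [hf0 m (by omega)]; simp
    rw [e]
    calc _ ≤ ∑ m ∈ Finset.Icc 1 U, K * (L * T m) := by
          refine (norm_sum_le _ _).trans (Finset.sum_le_sum fun m hm => ?_)
          rw [Finset.mem_Icc] at hm
          rw [norm_mul, Complex.norm_real, Real.norm_eq_abs]
          have := hf m hm.1 hm.2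
          have := hg m hm.1 hm.2
          gcongr
      _ = K * L * ∑ m ∈ Finset.Icc 1 U, T m := by
          rw [Finset.mul_sum]
          exact Finset.sum_congr rfl fun _ _ => by ring
      _ ≤ _ := by gcongr
  have t2 : ‖ES X α (mu1 * log)‖ ≤ 1 * (2 * Z) * (15 * Z ^ 3 * X * δ) := by
    refine tI mu1 log 1 (2 * Z) (by norm_num) (by positivity) (fun m _ _ => hmu1b m) ?_ ?_
    · intro m hm; rw [hmu1, lo_apply, if_neg (by omega)]
    · intro m hm hmU
      have h := abel (fun n => Real.log n) (fun n => eexp (α * ((m * n : ℕ) : ℝ) ^ 3)) (T m) (X / m)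
        (fun y hy => hT m hm hmU y hy)
      have hmono : ∀ k : ℕ, Real.log (k : ℝ) ≤ Real.log ((k + 1 : ℕ) : ℝ) := by
        intro k
        rcases Nat.eq_zero_or_pos k with rfl | hk
        · simp
        · exact Real.log_le_log (by exact_mod_cast hk) (by push_cast; linarith)
      have hsum : ∑ k ∈ Finset.range (X / m), |Real.log ((k + 1 : ℕ) : ℝ) - Real.log (k : ℝ)| =
          Real.log ((X / m : ℕ) : ℝ) := by
        rw [Finset.sum_congr rfl fun k _ => abs_of_nonneg (sub_nonneg.2 (hmono k)),
          Finset.sum_range_sub (fun k : ℕ => Real.log (k : ℝ))]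
        simp
      rw [hsum, abs_of_nonneg (Real.log_natCast_nonneg _)] at h
      refine le_trans (le_of_eq ?_) (h.trans ?_)
      · rfl
      · have := hT0 m
        have hp : 1 ≤ X / m := (Nat.one_le_div_iff (by omega)).2 (hmU.trans hUX)
        have := c.log_le (X / m) hp (Nat.div_le_self _ _)
        gcongr
        linarith
  have t3a : ‖ES X α (lo U cc * (zeta : ArithmeticFunction ℝ))‖ ≤ Z * 1 * (15 * Z ^ 3 * X * δ) := by
    refine tI _ _ Z 1 hZ0.le (by norm_num) ?_ ?_ ?_
    · intro m hm hmU
      rw [lo_apply, if_pos hmU]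
      exact hccb m hm (hmU.trans hUX)
    · intro m hm; rw [lo_apply, if_neg (by omega)]
    · intro m hm hmU
      have h := hT m hm hmU (X / m) le_rfl
      rw [one_mul]
      refine le_trans (le_of_eq ?_) h
      congr 1
      refine Finset.sum_congr rfl fun n hn => ?_
      rw [Finset.mem_Icc] at hn
      rw [natCoe_apply, zeta_apply, if_neg (by omega)]
      simp
  have hhicc : ∀ m, 1 ≤ m → m ≤ X → |hi U cc m| ≤ Z := by
    intro m h1 h2
    rw [hi_apply]
    split_ifs
    · simpa using hZ0.le
    · exact hccb m h1 h2
  have t3b : ‖ES X α (hi U cc * hi U (zeta : ArithmeticFunction ℝ))‖ ≤ 16 * Z ^ 5 * X * δ := by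
    refine typeII_af c U hU' _ _ hhicc ?_ ?_ ?_
    · intro m h1 h2
      rw [hi_apply, natCoe_apply, zeta_apply, if_neg (show ¬ m = 0 by omega)]
      split_ifs
      · simpa using hZ0.le
      · simpa using hZ1
    · intro m hm; rw [hi_apply, if_pos hm]
    · intro m hm; rw [hi_apply, if_pos hm]
  have t3c : ‖ES X α (hi U cc * lo U (zeta : ArithmeticFunction ℝ))‖ ≤ Z * X * δ := by
    have hcc0 : ∀ m, U ^ 2 < m → cc m = 0 := by
      intro m hm
      rw [hcc, mul_apply]
      refine Finset.sum_eq_zero fun x hx => ?_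
      rw [Nat.mem_divisorsAntidiagonal] at hx
      by_cases h1 : x.1 ≤ U
      · by_cases h2 : x.2 ≤ U
        · exfalso
          have : x.1 * x.2 ≤ U * U := Nat.mul_le_mul h1 h2
          rw [hx.1] at this
          nlinarith
        · rw [hL1, lo_apply U _ x.2, if_neg h2, mul_zero]
      · rw [hmu1, lo_apply U _ x.1, if_neg h1, zero_mul]
    rw [ES_mul]
    have hb : ∀ m ∈ Finset.Icc 1 X, ∀ n ∈ Finset.Icc 1 X, ‖(if m * n ≤ X then (hi U cc m : ℂ) *
        (lo U (zeta : ArithmeticFunction ℝ) n : ℂ) * eexp (α * ((m * n : ℕ) : ℝ) ^ 3) else 0)‖ ≤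
        if m ≤ U ^ 2 ∧ n ≤ U then Z else 0 := by
      intro m hm n hn
      rw [Finset.mem_Icc] at hm hn
      by_cases h1 : m ≤ U ^ 2
      · by_cases h2 : n ≤ U
        · rw [if_pos (show m ≤ U ^ 2 ∧ n ≤ U from ⟨h1, h2⟩)]
          split_ifs
          · rw [norm_mul, norm_mul, eexp_norm, mul_one, Complex.norm_real, Complex.norm_real,
              Real.norm_eq_abs, Real.norm_eq_abs, lo_apply, if_pos h2, natCoe_apply, zeta_apply,
              if_neg (show ¬ n = 0 by omega)]
            simpa using hhicc m hm.1 hm.2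
          · simpa using hZ0.le
        · rw [if_neg (show ¬ (m ≤ U ^ 2 ∧ n ≤ U) from fun h => h2 h.2), lo_apply, if_neg h2]
          simp
      · have : hi U cc m = 0 := by
          rw [hi_apply, hcc0 m (by omega)]; simp
        rw [if_neg (show ¬ (m ≤ U ^ 2 ∧ n ≤ U) from fun h => h1 h.1), this]
        simp
    calc _ ≤ ∑ m ∈ Finset.Icc 1 X, ∑ n ∈ Finset.Icc 1 X, (if m ≤ U ^ 2 ∧ n ≤ U then Z else 0) :=
          (norm_sum_le _ _).trans (Finset.sum_le_sum fun m hm =>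
            (norm_sum_le _ _).trans (Finset.sum_le_sum fun n hn => hb m hm n hn))
      _ = ∑ x ∈ (Finset.Icc 1 X ×ˢ Finset.Icc 1 X).filter (fun x => x.1 ≤ U ^ 2 ∧ x.2 ≤ U), Z := by
          rw [Finset.sum_filter, Finset.sum_product]
      _ ≤ ((U ^ 2 * U : ℕ) : ℝ) * Z := by
          rw [Finset.sum_const, nsmul_eq_mul]
          gcongr
          calc _ ≤ (Finset.Icc 1 (U ^ 2) ×ˢ Finset.Icc 1 U).card := Finset.card_le_card (by
                intro x hx
                simp only [Finset.mem_filter, Finset.mem_product, Finset.mem_Icc] at hx ⊢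
                tauto)
            _ = U ^ 2 * U := by simp
      _ = (U : ℝ) ^ 3 * Z := by push_cast; ring
      _ ≤ X * δ * Z := by gcongr
      _ = _ := by ring
  have t4 : ‖ES X α (hi U (moebius : ArithmeticFunction ℝ) *
      (hi U vonMangoldt * (zeta : ArithmeticFunction ℝ)))‖ ≤ 16 * Z ^ 5 * X * δ := by
    refine typeII_af c U hU' _ _ ?_ ?_ ?_ ?_
    · intro m h1 h2
      rw [hi_apply]
      split_ifs
      · simpa using hZ0.le
      · exact (moebius_abs m).trans hZ1
    · intro m h1 h2
      rw [mul_comm]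
      refine (conv_abs_le_log _ _ ?_ ?_ m).trans (c.log_le m h1 h2)
      · intro n
        rw [natCoe_apply, zeta_apply]
        split_ifs <;> simp
      · intro n
        rw [hi_apply]
        split_ifs
        · simpa using vonMangoldt_nonneg
        · rw [abs_of_nonneg vonMangoldt_nonneg]
    · intro m hm; rw [hi_apply, if_pos hm]
    · intro m hm
      rw [mul_apply]
      refine Finset.sum_eq_zero fun x hx => ?_
      rw [Nat.mem_divisorsAntidiagonal] at hx
      have : x.1 ≤ m := Nat.le_of_dvd (by omega) ⟨x.2, hx.1.symm⟩
      rw [hi_apply, if_pos (this.trans hm), zero_mul]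
  have e3 : cc * (zeta : ArithmeticFunction ℝ) = lo U cc * (zeta : ArithmeticFunction ℝ) +
      (hi U cc * hi U (zeta : ArithmeticFunction ℝ) + hi U cc * lo U (zeta : ArithmeticFunction ℝ)) := by
    conv_lhs => rw [← lo_add_hi U cc, add_mul]
    congr 1
    rw [← mul_add, add_comm (hi U _), lo_add_hi]
  rw [vaughan U, ES_add, ES_sub, ES_add, ← hmu1, ← hL1, ← hcc, e3, ES_add, ES_add]
  have hP : 0 ≤ X * δ := by positivity
  have hZ5 : Z ≤ Z ^ 5 := le_self_pow₀ hZ1 (by norm_num)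
  have hZ45 : Z ^ 4 ≤ Z ^ 5 := pow_le_pow_right₀ hZ1 (by norm_num)
  have n1 := mul_le_mul_of_nonneg_right hZ5 hP
  have n2 := mul_le_mul_of_nonneg_right hZ45 hP
  set A1 := ES X α L1
  set A2 := ES X α (mu1 * log)
  set A3 := ES X α (lo U cc * (zeta : ArithmeticFunction ℝ))
  set A4 := ES X α (hi U cc * hi U (zeta : ArithmeticFunction ℝ))
  set A5 := ES X α (hi U cc * lo U (zeta : ArithmeticFunction ℝ))
  set A6 := ES X α (hi U (moebius : ArithmeticFunction ℝ) *
      (hi U vonMangoldt * (zeta : ArithmeticFunction ℝ)))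
  have tri : ‖A1 + A2 - (A3 + (A4 + A5)) + A6‖ ≤ ‖A1‖ + ‖A2‖ + (‖A3‖ + (‖A4‖ + ‖A5‖)) + ‖A6‖ := by
    refine (norm_add_le _ _).trans (add_le_add ?_ le_rfl)
    refine (norm_sub_le _ _).trans (add_le_add (norm_add_le _ _) ?_)
    exact (norm_add_le _ _).trans (add_le_add le_rfl (norm_add_le _ _))
  refine tri.trans ?_
  have n3 : 0 ≤ Z ^ 5 * (X * δ) := by positivity
  have e1 : 1 * (2 * Z) * (15 * Z ^ 3 * X * δ) = 30 * (Z ^ 4 * (X * δ)) := by ring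
  have e2 : Z * 1 * (15 * Z ^ 3 * X * δ) = 15 * (Z ^ 4 * (X * δ)) := by ring
  have e4 : 16 * Z ^ 5 * X * δ = 16 * (Z ^ 5 * (X * δ)) := by ring
  have e5 : Z * X * δ = Z * (X * δ) := by ring
  have e6 : 100 * Z ^ 5 * X * δ = 100 * (Z ^ 5 * (X * δ)) := by ring
  rw [e1] at t2
  rw [e2] at t3a
  rw [e4] at t3b t4
  rw [e5] at t1 t3c
  rw [e6]
  linarith

end MinorArc


namespace MinorArc

/-- the Weyl-type saving factor -/
noncomputable def DD (q : ℕ) (t : ℝ) : ℝ := 1 / (q : ℝ) + (Real.sqrt t)⁻¹ + (q : ℝ) / t ^ 3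

lemma DD_pos {q : ℕ} (hq : 1 ≤ q) {t : ℝ} (ht : 1 ≤ t) : 0 < DD q t := by
  have : (0 : ℝ) < q := by exact_mod_cast hq
  unfold DD; positivity

lemma DD_root {q : ℕ} (hq : 1 ≤ q) {t : ℝ} (ht : 1 ≤ t) :
    (DD q t ^ ((1 : ℝ) / 16)) ^ 16 = DD q t := by
  rw [← Real.rpow_natCast, ← Real.rpow_mul (DD_pos hq ht).le]; norm_num

lemma DD_mul {q : ℕ} (hq : 1 ≤ q) {t : ℝ} (ht : 1 ≤ t) :
    t ^ 16 * DD q t = t ^ 16 / q + t ^ 15 * Real.sqrt t + q * t ^ 13 := by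
  have h0 : (0 : ℝ) < q := by exact_mod_cast hq
  have hs : 0 < Real.sqrt t := Real.sqrt_pos.mpr (by linarith)
  have hss : Real.sqrt t * Real.sqrt t = t := Real.mul_self_sqrt (by linarith)
  have h1 : t * (Real.sqrt t)⁻¹ = Real.sqrt t := by
    rw [← div_eq_mul_inv, div_eq_iff hs.ne', hss]
  have h2 : t ^ 16 * ((q : ℝ) / t ^ 3) = q * t ^ 13 := by field_simp
  unfold DD
  rw [mul_add, mul_add, h2]
  have h3 : t ^ 16 * (Real.sqrt t)⁻¹ = t ^ 15 * Real.sqrt t := by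
    calc t ^ 16 * (Real.sqrt t)⁻¹ = t ^ 15 * (t * (Real.sqrt t)⁻¹) := by ring
      _ = _ := by rw [h1]
  rw [h3]; ring

lemma DD_mono {q : ℕ} (hq : 1 ≤ q) {y t : ℝ} (hy : 1 ≤ y) (hyt : y ≤ t) :
    y * DD q y ^ ((1 : ℝ) / 16) ≤ t * DD q t ^ ((1 : ℝ) / 16) := by
  have ht : 1 ≤ t := hy.trans hyt
  have p1 := DD_pos hq hy
  have p2 := DD_pos hq ht
  refine le_of_pow_le_pow_left₀ (n := 16) (by norm_num) (by positivity) ?_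
  rw [mul_pow, mul_pow, DD_root hq hy, DD_root hq ht, DD_mul hq hy, DD_mul hq ht]
  have := Real.sqrt_le_sqrt hyt
  gcongr

lemma sqrt_le_DD {q : ℕ} (hq : 1 ≤ q) {y : ℝ} (hy : 1 ≤ y) :
    Real.sqrt y ≤ y * DD q y ^ ((1 : ℝ) / 16) := by
  have p1 := DD_pos hq hy
  have h0 : (0 : ℝ) < q := by exact_mod_cast hq
  refine le_of_pow_le_pow_left₀ (n := 16) (by norm_num) (by positivity) ?_
  rw [mul_pow, DD_root hq hy, DD_mul hq hy]
  have h1 : Real.sqrt y ^ 16 = y ^ 8 := by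
    have : Real.sqrt y ^ 2 = y := Real.sq_sqrt (by linarith)
    calc Real.sqrt y ^ 16 = (Real.sqrt y ^ 2) ^ 8 := by ring
      _ = _ := by rw [this]
  rw [h1]
  have h2 : 1 ≤ Real.sqrt y := by rw [Real.one_le_sqrt]; exact hy
  have h3 : y ^ 8 ≤ y ^ 15 := pow_le_pow_right₀ hy (by norm_num)
  have h4 : y ^ 15 * 1 ≤ y ^ 15 * Real.sqrt y := by gcongr
  have h5 : 0 ≤ y ^ 16 / q := by positivity
  have h6 : 0 ≤ q * y ^ 13 := by positivity
  linarith

lemma lambda_at {X : ℕ} {α : ℝ} {a : ℤ} {q : ℕ} {Z W : ℝ} (hq : 1 ≤ q)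
    (hg : Int.gcd a q = 1) (hα : |α - (a : ℝ) / (q : ℝ)| ≤ 1 / (q : ℝ) ^ 2)
    (hZ1 : 1 ≤ Z) (hlog : 1 + Real.log X ≤ Z)
    (hZ : ∀ k : ℕ, k ≠ 0 → k ≤ 100 * X ^ 10 → (k.divisors.card : ℝ) ≤ Z)
    (hXW : (X : ℝ) ≤ W) {y : ℕ} (hy1 : 1 ≤ y) (hyX : y ≤ X) :
    ‖ES y α ArithmeticFunction.vonMangoldt‖ ≤ 100 * Z ^ 5 * (W * DD q W ^ ((1 : ℝ) / 16)) := by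
  have hy : (1 : ℝ) ≤ y := by exact_mod_cast hy1
  have hyXr : (y : ℝ) ≤ X := by exact_mod_cast hyX
  have h0 : (0 : ℝ) < q := by exact_mod_cast hq
  have hlogy : Real.log y ≤ Real.log X := Real.log_le_log (by linarith) hyXr
  have p1 := DD_pos hq hy
  have hroot := DD_root hq hy
  have hmono := DD_mono hq hy (hyXr.trans hXW)
  refine le_trans ?_ (mul_le_mul_of_nonneg_left hmono (by positivity))
  have hs : 0 < Real.sqrt y := Real.sqrt_pos.mpr (by linarith)
  have hss : Real.sqrt y * Real.sqrt y = y := Real.mul_self_sqrt (by linarith)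
  by_cases hD : DD q y ≤ 1
  · have c : Ctx y α a q Z (DD q y ^ ((1 : ℝ) / 16)) := by
      refine ⟨hy1, hq, hg, hα, hZ1, by linarith, ?_, by positivity,
        Real.rpow_le_one p1.le hD (by norm_num), ?_, ?_, ?_⟩
      · intro k hk hk2
        exact hZ k hk (hk2.trans (by gcongr))
      · have e : (DD q y ^ ((1 : ℝ) / 16)) ^ 32 = DD q y ^ 2 := by
          calc _ = ((DD q y ^ ((1 : ℝ) / 16)) ^ 16) ^ 2 := by ring
            _ = _ := by rw [hroot]
        rw [e]
        have : (Real.sqrt y)⁻¹ ≤ DD q y := by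
          have : 0 ≤ 1 / (q : ℝ) := by positivity
          have : 0 ≤ (q : ℝ) / (y : ℝ) ^ 3 := by positivity
          unfold DD; linarith
        calc (1 : ℝ) = y * ((Real.sqrt y)⁻¹) ^ 2 := by
              nth_rewrite 1 [← hss]; field_simp
          _ ≤ _ := by gcongr
      · rw [hroot]
        have : 1 / (q : ℝ) ≤ DD q y := by
          have : 0 ≤ (q : ℝ) / (y : ℝ) ^ 3 := by positivity
          have : 0 ≤ (Real.sqrt y)⁻¹ := by positivity
          unfold DD; linarith
        calc (1 : ℝ) = q * (1 / q) := by field_simp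
          _ ≤ _ := by gcongr
      · rw [hroot]
        have : (q : ℝ) / (y : ℝ) ^ 3 ≤ DD q y := by
          have : 0 ≤ 1 / (q : ℝ) := by positivity
          have : 0 ≤ (Real.sqrt y)⁻¹ := by positivity
          unfold DD; linarith
        calc (q : ℝ) = y ^ 3 * (q / y ^ 3) := by field_simp
          _ ≤ _ := by gcongr
    have := lambda_bound c
    calc _ ≤ _ := this
      _ = _ := by ring
  · push Not at hD
    have hδ : 1 ≤ DD q y ^ ((1 : ℝ) / 16) := Real.one_le_rpow hD.le (by norm_num)
    have h1 : ‖ES y α ArithmeticFunction.vonMangoldt‖ ≤ y * Z := by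
      unfold ES
      refine (norm_sum_le _ _).trans ?_
      calc _ ≤ ∑ n ∈ Finset.Icc 1 y, Z := by
            refine Finset.sum_le_sum fun n hn => ?_
            rw [Finset.mem_Icc] at hn
            rw [norm_mul, eexp_norm, mul_one, Complex.norm_real, Real.norm_eq_abs,
              abs_of_nonneg ArithmeticFunction.vonMangoldt_nonneg]
            have l1 := ArithmeticFunction.vonMangoldt_le_log (n := n)
            have l2 : Real.log n ≤ Real.log y :=
              Real.log_le_log (by exact_mod_cast hn.1) (by exact_mod_cast hn.2)
            linarith
        _ = _ := by simp
    have h2 : Z ≤ 100 * Z ^ 5 := by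
      have : Z ^ 1 ≤ Z ^ 5 := pow_le_pow_right₀ hZ1 (by norm_num)
      have : 0 ≤ Z ^ 5 := by positivity
      linarith
    calc _ ≤ _ := h1
      _ = Z * (y * 1) := by ring
      _ ≤ _ := by gcongr

lemma theta_at {X : ℕ} {α : ℝ} {a : ℤ} {q : ℕ} {Z W : ℝ} (hq : 1 ≤ q)
    (hg : Int.gcd a q = 1) (hα : |α - (a : ℝ) / (q : ℝ)| ≤ 1 / (q : ℝ) ^ 2)
    (hZ1 : 1 ≤ Z) (hlog : 1 + Real.log X ≤ Z)
    (hZ : ∀ k : ℕ, k ≠ 0 → k ≤ 100 * X ^ 10 → (k.divisors.card : ℝ) ≤ Z)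
    (hX1 : 1 ≤ X) (hXW : (X : ℝ) ≤ W) {y : ℕ} (hyX : y ≤ X) :
    ‖∑ n ∈ Finset.Icc 1 y, (((if n.Prime then Real.log n else 0 : ℝ)) : ℂ) * eexp (α * (n : ℝ) ^ 3)‖
      ≤ 102 * Z ^ 5 * (W * DD q W ^ ((1 : ℝ) / 16)) := by
  have hW : 1 ≤ W := le_trans (by exact_mod_cast hX1) hXW
  have p2 := DD_pos hq hW
  rcases Nat.eq_zero_or_pos y with rfl | hy1
  · simp only [show Finset.Icc 1 0 = (∅ : Finset ℕ) from rfl, Finset.sum_empty, norm_zero]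
    positivity
  have hy : (1 : ℝ) ≤ y := by exact_mod_cast hy1
  have hyXr : (y : ℝ) ≤ X := by exact_mod_cast hyX
  have hlogy : Real.log y ≤ Real.log X := Real.log_le_log (by linarith) hyXr
  have hlam := lambda_at hq hg hα hZ1 hlog hZ hXW hy1 hyX
  have hdiff : ‖ES y α ArithmeticFunction.vonMangoldt -
      ∑ n ∈ Finset.Icc 1 y, (((if n.Prime then Real.log n else 0 : ℝ)) : ℂ) * eexp (α * (n : ℝ) ^ 3)‖
      ≤ 2 * Real.sqrt y * Real.log y := by
    refine le_trans ?_ (Chebyshev.psi_sub_theta_le hy)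
    rw [Chebyshev.psi_sub_theta_eq_sum_not_prime, Nat.floor_natCast, Finset.sum_filter]
    unfold ES
    rw [← Finset.sum_sub_distrib]
    refine (norm_sum_le _ _).trans (le_of_eq ?_)
    refine Finset.sum_congr (by ext; simp [Nat.succ_le_iff]) fun n hn => ?_
    rw [← sub_mul, norm_mul, eexp_norm, mul_one, ← Complex.ofReal_sub, Complex.norm_real,
      Real.norm_eq_abs]
    by_cases hp : n.Prime
    · simp [hp, ArithmeticFunction.vonMangoldt_apply_prime hp]
    · simp [hp, abs_of_nonneg (ArithmeticFunction.vonMangoldt_nonneg (n := n))]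
  have hsq : Real.sqrt y ≤ W * DD q W ^ ((1 : ℝ) / 16) :=
    (sqrt_le_DD hq hy).trans (DD_mono hq hy (hyXr.trans hXW))
  have h2 : Real.log y ≤ Z ^ 5 := by
    have : Z ^ 1 ≤ Z ^ 5 := pow_le_pow_right₀ hZ1 (by norm_num)
    linarith
  have h3 : 2 * Real.sqrt y * Real.log y ≤ 2 * (W * DD q W ^ ((1 : ℝ) / 16)) * Z ^ 5 := by
    have := Real.log_nonneg hy
    gcongr
  have h4 := norm_sub_norm_le (∑ n ∈ Finset.Icc 1 y,
    (((if n.Prime then Real.log n else 0 : ℝ)) : ℂ) * eexp (α * (n : ℝ) ^ 3))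
    (ES y α ArithmeticFunction.vonMangoldt)
  rw [norm_sub_rev] at h4
  linarith

/-- reciprocal log weight -/
noncomputable def wt (n : ℕ) : ℝ := (Real.log (max (n : ℝ) 2))⁻¹

lemma wt_anti : Antitone wt := by
  intro m n h
  unfold wt
  have h2 : (0 : ℝ) < Real.log (max (m : ℝ) 2) :=
    Real.log_pos (lt_of_lt_of_le (by norm_num) (le_max_right _ _))
  have hmn : (m : ℝ) ≤ n := by exact_mod_cast h
  refine inv_anti₀ h2 (Real.log_le_log (by positivity) ?_)
  exact max_le_max_right _ hmn

lemma wt_nonneg (n : ℕ) : 0 ≤ wt n := by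
  unfold wt
  exact inv_nonneg.mpr (Real.log_nonneg (le_trans (by norm_num) (le_max_right _ _)))

lemma wt_var (Y : ℕ) : |wt Y| + ∑ k ∈ Finset.range Y, |wt (k + 1) - wt k| ≤ 2 := by
  have h1 : ∀ k ∈ Finset.range Y, |wt (k + 1) - wt k| = wt k - wt (k + 1) := by
    intro k _
    rw [abs_sub_comm, abs_of_nonneg (sub_nonneg.mpr (wt_anti (Nat.le_succ k)))]
  rw [Finset.sum_congr rfl h1, Finset.sum_range_sub', abs_of_nonneg (wt_nonneg Y)]
  have : wt 0 ≤ 2 := by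
    unfold wt
    rw [Nat.cast_zero, max_eq_right (by norm_num)]
    rw [inv_le_comm₀ (Real.log_pos (by norm_num)) (by norm_num)]
    have := Real.log_two_gt_d9
    norm_num at this ⊢
    linarith
  linarith

lemma prime_bound {X : ℕ} {α : ℝ} {a : ℤ} {q : ℕ} {Z W : ℝ} (hq : 1 ≤ q)
    (hg : Int.gcd a q = 1) (hα : |α - (a : ℝ) / (q : ℝ)| ≤ 1 / (q : ℝ) ^ 2)
    (hZ1 : 1 ≤ Z) (hlog : 1 + Real.log X ≤ Z)
    (hZ : ∀ k : ℕ, k ≠ 0 → k ≤ 100 * X ^ 10 → (k.divisors.card : ℝ) ≤ Z)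
    (hX1 : 1 ≤ X) (hXW : (X : ℝ) ≤ W) :
    ‖∑ n ∈ (Finset.Icc 1 X).filter Nat.Prime, eexp (α * (n : ℝ) ^ 3)‖
      ≤ 204 * Z ^ 5 * (W * DD q W ^ ((1 : ℝ) / 16)) := by
  have hW : 1 ≤ W := le_trans (by exact_mod_cast hX1) hXW
  have p2 := DD_pos hq hW
  have h := abel wt (fun n => (((if n.Prime then Real.log n else 0 : ℝ)) : ℂ) *
    eexp (α * (n : ℝ) ^ 3)) _ X (fun y hy => theta_at hq hg hα hZ1 hlog hZ hX1 hXW hy)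
  have e : ∑ n ∈ (Finset.Icc 1 X).filter Nat.Prime, eexp (α * (n : ℝ) ^ 3) =
      ∑ n ∈ Finset.Icc 1 X, (wt n : ℂ) * ((((if n.Prime then Real.log n else 0 : ℝ)) : ℂ) *
        eexp (α * (n : ℝ) ^ 3)) := by
    rw [Finset.sum_filter]
    refine Finset.sum_congr rfl fun n _ => ?_
    by_cases hp : n.Prime
    · rw [if_pos hp, if_pos hp, ← mul_assoc, ← Complex.ofReal_mul]
      have h2 : (2 : ℝ) ≤ n := by exact_mod_cast hp.two_le
      have : wt n * Real.log n = 1 := by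
        unfold wt
        rw [max_eq_left h2, inv_mul_cancel₀ (Real.log_pos (by linarith)).ne']
      rw [this]; simp
    · simp [hp]
  rw [e]
  refine h.trans ?_
  calc _ ≤ 2 * (102 * Z ^ 5 * (W * DD q W ^ ((1 : ℝ) / 16))) := by
        have := wt_var X
        gcongr
    _ = _ := by ring

end MinorArc

open MinorArc in
theorem S₃_minor_arc_bound (ε : ℝ) (hε : 0 < ε) :
    ∃ C > (0 : ℝ), ∀ N : ℕ, 2 ≤ N → ∀ α : ℝ, ∀ a : ℤ, ∀ q : ℕ, 1 ≤ q →
      Int.gcd a q = 1 → |α - (a : ℝ) / (q : ℝ)| ≤ 1 / (q : ℝ) ^ 2 →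
      ‖S₃ N α‖ ≤ C * (N : ℝ) ^ ((1 : ℝ) / 3 + ε) *
        (1 / (q : ℝ) + (N : ℝ) ^ (-(1 : ℝ) / 6) + (q : ℝ) / (N : ℝ)) ^ ((1 : ℝ) / 16) := by
  obtain ⟨C, hC1, hC⟩ := divisor_bound (ε / 50) (by positivity)
  set K : ℝ := C * 100 ^ (ε / 50) + 1 + 1 / (ε / 5) with hK
  have hK1 : 1 ≤ K := by
    have : 0 ≤ C * (100 : ℝ) ^ (ε / 50) := by positivity
    have : 0 ≤ 1 / (ε / 5) := by positivity
    linarith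
  refine ⟨204 * K ^ 5, by positivity, ?_⟩
  intro N hN α a q hq hg hα
  have hNr : (2 : ℝ) ≤ N := by exact_mod_cast hN
  have hN0 : (0 : ℝ) ≤ N := by linarith
  have hNe : 1 ≤ (N : ℝ) ^ (ε / 5) := Real.one_le_rpow (by linarith) (by positivity)
  set W : ℝ := (N : ℝ) ^ ((1 : ℝ) / 3) with hWdef
  have hW1 : 1 ≤ W := Real.one_le_rpow (by linarith) (by norm_num)
  have hW3 : W ^ 3 = N := by
    rw [hWdef, ← Real.rpow_natCast, ← Real.rpow_mul hN0]; norm_num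
  have hWN : W ≤ N := by
    rw [← hW3]; exact le_self_pow₀ hW1 (by norm_num)
  set X : ℕ := ⌊W⌋₊ with hX
  have hX1 : 1 ≤ X := Nat.one_le_floor_iff W |>.mpr hW1
  have hXW : (X : ℝ) ≤ W := Nat.floor_le (by linarith)
  have hXr : (1 : ℝ) ≤ X := by exact_mod_cast hX1
  set Z : ℝ := K * (N : ℝ) ^ (ε / 5) with hZ
  have hZ1 : 1 ≤ Z := one_le_mul_of_one_le_of_one_le hK1 hNe
  have hlog : 1 + Real.log X ≤ Z := by
    have h1 : Real.log X ≤ Real.log N := Real.log_le_log (by linarith) (hXW.trans hWN)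
    have h2 := Real.log_le_rpow_div hN0 (show 0 < ε / 5 by positivity)
    have h3 : 0 ≤ C * (100 : ℝ) ^ (ε / 50) * (N : ℝ) ^ (ε / 5) := by positivity
    have h4 : Z = C * (100 : ℝ) ^ (ε / 50) * (N : ℝ) ^ (ε / 5) + (N : ℝ) ^ (ε / 5)
      + (N : ℝ) ^ (ε / 5) / (ε / 5) := by rw [hZ, hK]; ring
    linarith
  have hdiv : ∀ k : ℕ, k ≠ 0 → k ≤ 100 * X ^ 10 → (k.divisors.card : ℝ) ≤ Z := by
    intro k hk hk2
    have h1 : (k : ℝ) ≤ 100 * (N : ℝ) ^ 10 := by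
      have : (k : ℝ) ≤ 100 * (X : ℝ) ^ 10 := by exact_mod_cast hk2
      refine this.trans ?_
      have := hXW.trans hWN
      gcongr
    calc _ ≤ _ := hC k hk
      _ ≤ C * (100 * (N : ℝ) ^ 10) ^ (ε / 50) := by gcongr
      _ = C * 100 ^ (ε / 50) * (N : ℝ) ^ (ε / 5) := by
        rw [Real.mul_rpow (by norm_num) (by positivity), ← Real.rpow_natCast (N : ℝ) 10,
          ← Real.rpow_mul hN0]
        rw [show ((10 : ℕ) : ℝ) * (ε / 50) = ε / 5 by push_cast; ring]; ring
      _ ≤ Z := by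
        rw [hZ]
        have : 0 ≤ 1 / (ε / 5) := by positivity
        gcongr
        linarith
  have main := prime_bound hq hg hα hZ1 hlog hdiv hX1 hXW
  have e1 : S₃ N α = ∑ n ∈ (Finset.Icc 1 X).filter Nat.Prime, eexp (α * (n : ℝ) ^ 3) := by
    unfold S₃
    refine Finset.sum_congr ?_ fun _ _ => rfl
    ext p
    simp only [Finset.mem_filter, Finset.mem_range, Finset.mem_Icc]
    constructor
    · rintro ⟨_, hp, hpw⟩
      exact ⟨⟨hp.one_lt.le, Nat.le_floor hpw⟩, hp⟩
    · rintro ⟨⟨_, h2⟩, hp⟩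
      have h3 : (p : ℝ) ≤ W := le_trans (by exact_mod_cast h2) hXW
      refine ⟨?_, hp, h3⟩
      have h4 : (p : ℝ) ≤ N := h3.trans hWN
      have h5 : p ≤ N := by exact_mod_cast h4
      omega
  have e2 : DD q W = 1 / (q : ℝ) + (N : ℝ) ^ (-(1 : ℝ) / 6) + (q : ℝ) / (N : ℝ) := by
    unfold DD
    rw [hW3, hWdef, Real.sqrt_eq_rpow, ← Real.rpow_mul hN0, ← Real.rpow_neg hN0]
    norm_num
  have e3 : Z ^ 5 = K ^ 5 * (N : ℝ) ^ ε := by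
    rw [hZ, mul_pow, ← Real.rpow_natCast ((N : ℝ) ^ (ε / 5)), ← Real.rpow_mul hN0]
    congr 2; push_cast; ring
  rw [e1, ← e2, Real.rpow_add (by linarith)]
  refine main.trans (le_of_eq ?_)
  rw [e3]; ring
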